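/- Let p be a prime and n ≥ 1. For a pair X = (A, B) of n×n matrices over ℚ_p, let ι(X) denote the 2n×2n block matrix with blocks [[0, A], [B, 0]], and let 𝔇(X) ∈ ℚ_p be the coefficient of T^{2n} in the characteristic polynomial of the ℚ_p-linear endomorphism ad(ι(X)) : M_{2n}(ℚ_p) → M_{2n}(ℚ_p), M ↦ ι(X)·M − M·ι(X). Then for every real r ≥ 0, the function X ↦ ‖𝔇(X)‖_p^{−1/4} · (max{1, −(1/2)·log ‖𝔇(X)‖_p})^r (interpreted as 0 when 𝔇(X) = 0) is locally integrable on M_n(ℚ_p) × M_n(ℚ_p) with respect to any additive Haar measure. -/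

import Mathlib

open MeasureTheory

/-- The Weyl discriminant polynomial `𝔇(X)`: the coefficient of `T^(2n)` in the
characteristic polynomial of the adjoint endomorphism `M ↦ ι(X)·M − M·ι(X)` of
`M_{2n}(ℚ_p)`, where `ι(A, B)` is the block matrix `[[0, A], [B, 0]]`. -/
noncomputable def weylDiscriminantGuoJacquet (p : ℕ) [Fact p.Prime] (n : ℕ)
    (X : Matrix (Fin n) (Fin n) ℚ_[p] × Matrix (Fin n) (Fin n) ℚ_[p]) : ℚ_[p] :=
  (LinearMap.charpoly
    (LinearMap.mulLeft ℚ_[p] (Matrix.fromBlocks 0 X.1 X.2 0) -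
      LinearMap.mulRight ℚ_[p] (Matrix.fromBlocks 0 X.1 X.2 0))).coeff (2 * n)

/-! Let `y i ^ 2` be the eigenvalues of `A * B`. Those of `ι(A, B)` are the `± y i`, so `‖𝔇(A, B)‖`
is the product of the norms of the differences of distinct elements of the family `± y i`, that is
`∏ i, ‖2 * y i‖ ^ 2 * ∏ i < j, ‖y i ^ 2 - y j ^ 2‖ ^ 4`. The Jacobian of
`y ↦ charpoly (A * B) = ∏ i, (X - y i ^ 2)` is `∏ i, 2 * y i * ∏ i < j, (y j ^ 2 - y i ^ 2)`, of
norm at most `‖𝔇‖ ^ (1 / 4)` up to a constant. By Krasner's lemma and Galois descent, the vectors of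
square roots of the eigenvalues arising from characteristic polynomials over `ℤ_p` lie in finitely
many linear images of `ℤ_p ^ n`. On `‖𝔇‖ = v` the Jacobian is of size `v ^ (1 / 4)` and one of the
factors of `𝔇` is small, which cuts out a thin slab: the characteristic polynomials over `ℤ_p` with
`‖𝔇‖ = v` form a set of volume `O(v ^ (1 / 4 + δ))` with `δ > 0`.

Pulling this estimate back along `(A, B) ↦ charpoly (A * B)` costs an exponent `t < 1` arbitrarily
close to `1`: along rank one perturbations `N + a bᵀ` the characteristic polynomial is affine in `a`
with determinant `± det (krylovMatrix N b)`, whose moments of order `-t` are finite. Hence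
`‖𝔇‖ ^ (-s)` is locally integrable for some `s > 1 / 4`, which absorbs the logarithm. -/

open scoped ENNReal Matrix

section PadicIntVolume

variable {p : ℕ} [Fact p.Prime]

noncomputable instance padicIntMeasurableSpace : MeasurableSpace ℤ_[p] := borel _

instance padicInt_borelSpace : BorelSpace ℤ_[p] := ⟨rfl⟩

/-- The Haar probability measure on `ℤ_p`. -/
noncomputable instance padicIntMeasureSpace : MeasureSpace ℤ_[p] where
  volume := Measure.addHaarMeasure ⊤

instance padicInt_volume_isAddHaarMeasure : (volume : Measure ℤ_[p]).IsAddHaarMeasure :=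
  inferInstanceAs (Measure.addHaarMeasure ⊤).IsAddHaarMeasure

instance padicInt_volume_isProbabilityMeasure :
    IsProbabilityMeasure (volume : Measure ℤ_[p]) :=
  ⟨Measure.addHaarMeasure_self (K₀ := (⊤ : TopologicalSpace.PositiveCompacts ℤ_[p]))⟩

theorem padicInt_volume_span_pow (k : ℕ) :
    volume (Ideal.span {(p : ℤ_[p]) ^ k} : Set ℤ_[p]) = ((p : ℝ≥0∞) ^ k)⁻¹ := by
  have : NeZero (p ^ k) := ⟨pow_ne_zero _ (Fact.out : p.Prime).ne_zero⟩
  have hindex : (PadicInt.toZModPow (p := p) k).toAddMonoidHom.ker.index = p ^ k := by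
    rw [AddSubgroup.index_ker,
      AddMonoidHom.range_eq_top.2 (ZMod.ringHom_surjective (PadicInt.toZModPow k))]
    simp
  have hker : ((PadicInt.toZModPow (p := p) k).toAddMonoidHom.ker : Set ℤ_[p]) =
      (Ideal.span {(p : ℤ_[p]) ^ k} : Set ℤ_[p]) := by
    rw [← PadicInt.ker_toZModPow]; rfl
  have : (PadicInt.toZModPow (p := p) k).toAddMonoidHom.ker.FiniteIndex :=
    ⟨by rw [hindex]; exact NeZero.ne _⟩
  have hclosed : IsClosed (Ideal.span {(p : ℤ_[p]) ^ k} : Set ℤ_[p]) := inferInstance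
  have h := AddSubgroup.index_mul_measure (PadicInt.toZModPow (p := p) k).toAddMonoidHom.ker
    (hker ▸ hclosed.measurableSet) volume
  rw [hindex, measure_univ, mul_comm, hker] at h
  exact_mod_cast ENNReal.eq_inv_of_mul_eq_one_left h

theorem padicInt_volume_span_singleton (y : ℤ_[p]) :
    volume (Ideal.span {y} : Set ℤ_[p]) = ‖y‖ₑ := by
  rcases eq_or_ne y 0 with rfl | hy
  · have h (k : ℕ) : volume (Ideal.span {(0 : ℤ_[p])} : Set ℤ_[p]) ≤ ((p : ℝ≥0∞)⁻¹) ^ k := by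
      rw [← ENNReal.inv_pow, ← padicInt_volume_span_pow k]
      exact measure_mono (by simp)
    simpa using ge_of_tendsto' (ENNReal.tendsto_pow_atTop_nhds_zero_of_lt_one
      (by simpa using (Fact.out : p.Prime).one_lt)) h
  · have hspan : Ideal.span {y} = Ideal.span {(p : ℤ_[p]) ^ y.valuation} := by
      conv_lhs => rw [PadicInt.unitCoeff_spec hy]
      exact Ideal.span_singleton_mul_left_unit (Units.isUnit _) _
    rw [hspan, padicInt_volume_span_pow, ← ofReal_norm, PadicInt.norm_eq_zpow_neg_valuation hy,
      zpow_neg, zpow_natCast,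
      ENNReal.ofReal_inv_of_pos (pow_pos (Nat.cast_pos.2 (Fact.out : p.Prime).pos) _),
      ENNReal.ofReal_pow (by positivity), ENNReal.ofReal_natCast]

theorem padicInt_dvd_iff_norm_le {x y : ℤ_[p]} : y ∣ x ↔ ‖x‖ ≤ ‖y‖ := by
  rcases eq_or_ne y 0 with rfl | hy
  · simp [zero_dvd_iff]
  rw [PadicInt.norm_eq_zpow_neg_valuation hy, PadicInt.norm_le_pow_iff_mem_span_pow,
    Ideal.mem_span_singleton]
  nth_rw 1 [PadicInt.unitCoeff_spec hy]
  exact Units.mul_left_dvd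

theorem padicInt_volume_norm_sub_le (a : ℤ_[p]) (r : ℝ) :
    volume {x : ℤ_[p] | ‖x - a‖ ≤ r} ≤ ENNReal.ofReal r := by
  rcases lt_or_ge r 0 with hr | hr
  · have hempty : {x : ℤ_[p] | ‖x - a‖ ≤ r} = ∅ :=
      Set.eq_empty_of_forall_notMem fun x hx => (hr.trans_le (norm_nonneg _)).not_ge hx
    simp [hempty]
  obtain ⟨y, hyr, hy⟩ := (isClosed_le (continuous_norm (E := ℤ_[p]))
    (continuous_const (y := r))).isCompact.exists_isMaxOn ⟨0, by simpa⟩ continuous_norm.continuousOn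
  calc volume {x : ℤ_[p] | ‖x - a‖ ≤ r}
      ≤ volume ((fun x => x - a) ⁻¹' (Ideal.span {y} : Set ℤ_[p])) := measure_mono fun x hx =>
        Ideal.mem_span_singleton.2 (padicInt_dvd_iff_norm_le.2 (hy hx))
    _ = ‖y‖ₑ := by
      simp only [sub_eq_add_neg, measure_preimage_add_right, padicInt_volume_span_singleton]
    _ ≤ ENNReal.ofReal r := by
      rw [← ofReal_norm]; exact ENNReal.ofReal_le_ofReal hyr

end PadicIntVolume

instance isAddHaarMeasure_volume_prod {G H : Type*} [AddGroup G] [TopologicalSpace G]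
    [MeasureSpace G] [MeasurableAdd G] [SFinite (volume : Measure G)]
    [(volume : Measure G).IsAddHaarMeasure] [AddGroup H] [TopologicalSpace H] [MeasureSpace H]
    [MeasurableAdd H] [SFinite (volume : Measure H)] [(volume : Measure H).IsAddHaarMeasure] :
    (volume : Measure (G × H)).IsAddHaarMeasure :=
  inferInstanceAs ((volume : Measure G).prod (volume : Measure H)).IsAddHaarMeasure

section SubmoduleVolume

theorem exists_linearEquiv_range_comp_diagonal_eq {R ι : Type*} [CommRing R] [IsDomain R]
    [IsPrincipalIdealRing R] [Fintype ι] [DecidableEq ι] (N : Submodule R (ι → R)) :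
    ∃ (e : (ι → R) ≃ₗ[R] (ι → R)) (d : ι → R),
      LinearMap.range (e.toLinearMap ∘ₗ (Matrix.diagonal d).toLin') = N := by
  obtain ⟨k, snf⟩ := Submodule.smithNormalForm (Pi.basisFun R ι) N
  set d : ι → R := Function.extend snf.f snf.a 0
  refine ⟨snf.bM.equivFun.symm, d, ?_⟩
  have hbasis (i : ι) : (snf.bM.equivFun.symm.toLinearMap ∘ₗ (Matrix.diagonal d).toLin')
      (Pi.basisFun R ι i) = d i • snf.bM i := by
    rw [LinearMap.comp_apply, LinearEquiv.coe_coe, Pi.basisFun_apply, Matrix.toLin'_apply,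
      Matrix.diagonal_mulVec_single, mul_one, ← mul_one (d i), ← smul_eq_mul,
      Pi.single_smul', map_smul, Module.Basis.equivFun_symm_apply]
    simp [Pi.single_apply]
  have hf (j : Fin k) : d (snf.f j) • snf.bM (snf.f j) = snf.bN j := by
    rw [snf.snf, ← snf.f.injective.extend_apply snf.a 0]
  rw [LinearMap.range_eq_map, ← (Pi.basisFun R ι).span_eq, Submodule.map_span,
    ← Set.range_comp]
  refine le_antisymm (Submodule.span_le.2 ?_) ?_
  · rintro _ ⟨i, rfl⟩
    rw [Function.comp_apply, hbasis, SetLike.mem_coe]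
    by_cases hi : ∃ j, snf.f j = i
    · obtain ⟨j, rfl⟩ := hi
      exact hf j ▸ (snf.bN j).2
    · rw [show d i = 0 from Function.extend_apply' _ _ _ hi, zero_smul]
      exact N.zero_mem
  · have hN : Submodule.span R (Set.range (N.subtype ∘ snf.bN)) = N := by
      rw [Set.range_comp, ← Submodule.map_span, snf.bN.span_eq, N.map_subtype_top]
    refine hN.ge.trans (Submodule.span_le.2 ?_)
    rintro _ ⟨j, rfl⟩
    exact Submodule.subset_span ⟨snf.f j, (hbasis _).trans (hf j)⟩

variable {p : ℕ} [Fact p.Prime] {ι : Type*} [Fintype ι]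

theorem padicInt_volume_image_linearEquiv (e : (ι → ℤ_[p]) ≃ₗ[ℤ_[p]] (ι → ℤ_[p]))
    (S : Set (ι → ℤ_[p])) : volume (e '' S) = volume S := by
  have hcont : Continuous e := e.toLinearMap.continuous_on_pi
  have hpres : MeasurePreserving e :=
    AddMonoidHom.measurePreserving (f := e.toLinearMap.toAddMonoidHom) hcont e.surjective (by simp)
  rw [← hpres.measure_preimage_emb (hcont.isClosedEmbedding e.injective).measurableEmbedding,
    Set.preimage_image_eq S e.injective]

theorem padicInt_volume_range_diagonal [DecidableEq ι] (d : ι → ℤ_[p]) :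
    volume (LinearMap.range (Matrix.diagonal d).toLin' : Set (ι → ℤ_[p])) = ∏ i, ‖d i‖ₑ := by
  have hpi : (LinearMap.range (Matrix.diagonal d).toLin' : Set (ι → ℤ_[p])) =
      Set.univ.pi fun i => (Ideal.span {d i} : Set ℤ_[p]) := by
    ext x
    simp only [SetLike.mem_coe, LinearMap.mem_range, Matrix.toLin'_apply, funext_iff,
      Matrix.mulVec_diagonal, Set.mem_univ_pi, Ideal.mem_span_singleton, dvd_def,
      eq_comm (b := x _)]
    exact (Classical.skolem (b := fun _ => ℤ_[p]) (p := fun i c => x i = d i * c)).symm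
  simp only [hpi, volume_pi_pi, padicInt_volume_span_singleton]

theorem padicInt_exists_range_eq_volume_eq (N : Submodule ℤ_[p] (ι → ℤ_[p])) :
    ∃ f : (ι → ℤ_[p]) →ₗ[ℤ_[p]] (ι → ℤ_[p]),
      LinearMap.range f = N ∧ volume (N : Set (ι → ℤ_[p])) = ‖LinearMap.det f‖ₑ := by
  classical
  obtain ⟨e, d, hrange⟩ := exists_linearEquiv_range_comp_diagonal_eq N
  have hunit : ‖LinearMap.det e.toLinearMap‖ₑ = 1 := by
    rw [← ofReal_norm, PadicInt.isUnit_iff.1 e.isUnit_det', ENNReal.ofReal_one]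
  refine ⟨_, hrange, ?_⟩
  rw [← hrange, LinearMap.range_comp, Submodule.map_coe, LinearEquiv.coe_coe,
    padicInt_volume_image_linearEquiv, padicInt_volume_range_diagonal, LinearMap.det_comp,
    enorm_mul, hunit, one_mul, LinearMap.det_toLin', Matrix.det_diagonal]
  simp only [enorm_eq_nnnorm, nnnorm_prod, ENNReal.ofNNReal_finsetProd]

theorem padicInt_enorm_det_le_volume_range (f : (ι → ℤ_[p]) →ₗ[ℤ_[p]] (ι → ℤ_[p])) :
    ‖LinearMap.det f‖ₑ ≤ volume (LinearMap.range f : Set (ι → ℤ_[p])) := by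
  obtain ⟨h, hrange, hvol⟩ := padicInt_exists_range_eq_volume_eq (LinearMap.range f)
  obtain ⟨g, hg⟩ := Module.projective_lifting_property h.rangeRestrict
    (f.codRestrict (LinearMap.range h) fun x => hrange ▸ f.mem_range_self x)
    h.surjective_rangeRestrict
  have hfac : f = h ∘ₗ g := by
    ext1 x
    exact (congrArg Subtype.val (LinearMap.congr_fun hg x)).symm
  have hnorm : ‖LinearMap.det g‖ₑ ≤ 1 := by
    rw [← ofReal_norm]
    exact ENNReal.ofReal_le_one.2 (PadicInt.norm_le_one _)
  calc ‖LinearMap.det f‖ₑ = ‖LinearMap.det h‖ₑ * ‖LinearMap.det g‖ₑ := by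
        rw [hfac, LinearMap.det_comp, enorm_mul]
    _ ≤ ‖LinearMap.det h‖ₑ := mul_le_of_le_one_right' hnorm
    _ = _ := hvol.symm

theorem padicInt_enorm_det_mul_volume_preimage_le (f : (ι → ℤ_[p]) →ₗ[ℤ_[p]] (ι → ℤ_[p]))
    (S : Set (ι → ℤ_[p])) : ‖LinearMap.det f‖ₑ * volume (f ⁻¹' S) ≤ volume S := by
  rcases eq_or_ne (LinearMap.det f) 0 with hdet | hdet
  · simp [hdet]
  have hinj : Function.Injective f := by
    rw [← LinearMap.ker_eq_bot]
    exact not_not.1 (mt LinearMap.det_eq_zero_iff_ker_ne_bot.2 hdet)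
  have hemb : MeasurableEmbedding f.toAddMonoidHom :=
    (f.continuous_on_pi.isClosedEmbedding hinj).measurableEmbedding
  set ν := (volume : Measure (ι → ℤ_[p])).comap f.toAddMonoidHom
  have hν (T : Set (ι → ℤ_[p])) : ν T = volume (f '' T) := hemb.comap_apply _ _
  have : ν.IsAddLeftInvariant := .comap _ hemb
  have : IsFiniteMeasure ν := ⟨hν _ ▸ measure_lt_top _ _⟩
  have hsmul := Measure.isAddInvariant_eq_smul_of_compactSpace ν volume
  have huniv : ν Set.univ * volume (f ⁻¹' S) = ν (f ⁻¹' S) := by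
    rw [hsmul]
    simp
  calc ‖LinearMap.det f‖ₑ * volume (f ⁻¹' S)
      ≤ volume (Set.range f) * volume (f ⁻¹' S) := by
        gcongr
        exact padicInt_enorm_det_le_volume_range f
    _ = volume (f '' (f ⁻¹' S)) := by rw [← Set.image_univ, ← hν, huniv, hν]
    _ ≤ volume S := measure_mono (Set.image_preimage_subset f S)

end SubmoduleVolume

theorem norm_sub_le_max {E : Type*} [SeminormedAddCommGroup E] [IsUltrametricDist E] (x y : E) :
    ‖x - y‖ ≤ max ‖x‖ ‖y‖ := by
  rw [sub_eq_add_neg, ← norm_neg y]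
  exact IsUltrametricDist.norm_add_le_max x (-y)

theorem norm_det_le_prod_of_norm_row_le {K ι : Type*} [NormedField K] [IsUltrametricDist K]
    [Fintype ι] [DecidableEq ι] {A : Matrix ι ι K} {r : ι → ℝ} (hA : ∀ i j, ‖A i j‖ ≤ r i) :
    ‖A.det‖ ≤ ∏ i, r i := by
  rw [← Matrix.det_transpose, Matrix.det_apply]
  refine IsUltrametricDist.norm_sum_le_of_forall_le_of_nonempty Finset.univ_nonempty fun σ _ => ?_
  calc ‖Equiv.Perm.sign σ • ∏ i, A.transpose (σ i) i‖ = ∏ i, ‖A i (σ i)‖ := by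
        rcases Int.units_eq_one_or (Equiv.Perm.sign σ) with h | h <;> simp [h]
    _ ≤ ∏ i, r i := Finset.prod_le_prod (fun _ _ => norm_nonneg _) fun i _ => hA i _

section LinearFormVolume

variable {p : ℕ} [Fact p.Prime] (Ω : Type*) [NormedField Ω] [NormedAlgebra ℚ_[p] Ω]

/-- The isometric embedding of `ℤ_p` into a normed field extension of `ℚ_p`. -/
noncomputable def padicIntEmb : ℤ_[p] →+* Ω :=
  (algebraMap ℚ_[p] Ω).comp PadicInt.Coe.ringHom

theorem norm_padicIntEmb (x : ℤ_[p]) : ‖padicIntEmb Ω x‖ = ‖x‖ :=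
  norm_algebraMap' Ω (x : ℚ_[p])

variable {Ω} {ι : Type*} [Fintype ι]

theorem mulVec_padicIntEmb_add (A : Matrix ι ι Ω) (g h : ι → ℤ_[p]) :
    A.mulVec (padicIntEmb Ω ∘ (g + h)) =
      A.mulVec (padicIntEmb Ω ∘ g) + A.mulVec (padicIntEmb Ω ∘ h) := by
  rw [← Matrix.mulVec_add]
  congr 1
  ext
  simp

theorem mulVec_padicIntEmb_smul (A : Matrix ι ι Ω) (c : ℤ_[p]) (g : ι → ℤ_[p]) :
    A.mulVec (padicIntEmb Ω ∘ (c • g)) = padicIntEmb Ω c • A.mulVec (padicIntEmb Ω ∘ g) := by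
  rw [← Matrix.mulVec_smul]
  congr 1
  ext
  simp

variable [IsUltrametricDist Ω]

theorem norm_det_mul_volume_linear_le [DecidableEq ι] (A : Matrix ι ι Ω) {r : ι → ℝ}
    (hr : ∀ i, 0 ≤ r i) :
    ‖A.det‖ₑ * volume {g : ι → ℤ_[p] | ∀ i, ‖A.mulVec (padicIntEmb Ω ∘ g) i‖ ≤ r i} ≤
        ENNReal.ofReal (∏ i, r i) := by
  let N : Submodule ℤ_[p] (ι → ℤ_[p]) :=
    { carrier := {g | ∀ i, ‖A.mulVec (padicIntEmb Ω ∘ g) i‖ ≤ r i}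
      zero_mem' i := by simpa [Function.comp_def, ← Pi.zero_def] using hr i
      add_mem' := fun {g h} hg hh i => by
        rw [mulVec_padicIntEmb_add]
        exact (IsUltrametricDist.norm_add_le_max _ _).trans (max_le (hg i) (hh i))
      smul_mem' := fun c g hg i => by
        rw [mulVec_padicIntEmb_smul, Pi.smul_apply, smul_eq_mul, norm_mul, norm_padicIntEmb]
        exact (mul_le_of_le_one_left (norm_nonneg _) (PadicInt.norm_le_one c)).trans (hg i) }
  obtain ⟨f, hf, hvol⟩ := padicInt_exists_range_eq_volume_eq N
  have hentry (i j : ι) :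
      ‖(A * (padicIntEmb Ω).mapMatrix (LinearMap.toMatrix' f)) i j‖ ≤ r i := by
    have hmem : f (Pi.single j 1) ∈ N := hf ▸ f.mem_range_self _
    exact hmem i
  calc ‖A.det‖ₑ * volume (N : Set (ι → ℤ_[p]))
      = ENNReal.ofReal ‖(A * (padicIntEmb Ω).mapMatrix (LinearMap.toMatrix' f)).det‖ := by
        rw [hvol, Matrix.det_mul, ← RingHom.map_det, LinearMap.det_toMatrix', norm_mul,
          norm_padicIntEmb, ENNReal.ofReal_mul (norm_nonneg _), ofReal_norm, ofReal_norm]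
    _ ≤ ENNReal.ofReal (∏ i, r i) :=
        ENNReal.ofReal_le_ofReal (norm_det_le_prod_of_norm_row_le hentry)

theorem norm_det_mul_volume_affine_le [DecidableEq ι] (A : Matrix ι ι Ω) (d : ι → Ω)
    {r : ι → ℝ} (hr : ∀ i, 0 ≤ r i) :
    ‖A.det‖ₑ * volume {g : ι → ℤ_[p] | ∀ i, ‖(A.mulVec (padicIntEmb Ω ∘ g) + d) i‖ ≤ r i} ≤
        ENNReal.ofReal (∏ i, r i) := by
  rcases Set.eq_empty_or_nonempty
    {g : ι → ℤ_[p] | ∀ i, ‖(A.mulVec (padicIntEmb Ω ∘ g) + d) i‖ ≤ r i} with h | ⟨y, hy⟩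
  · rw [h, measure_empty, mul_zero]
    exact zero_le
  refine le_trans ?_ (norm_det_mul_volume_linear_le (p := p) A hr)
  rw [← measure_preimage_add_right volume y]
  refine mul_le_mul_right (measure_mono fun g hg i => ?_) _
  have hsub : A.mulVec (padicIntEmb Ω ∘ g) =
      (A.mulVec (padicIntEmb Ω ∘ (g + y)) + d) - (A.mulVec (padicIntEmb Ω ∘ y) + d) := by
    rw [mulVec_padicIntEmb_add]
    abel
  rw [hsub, Pi.sub_apply]
  exact (norm_sub_le_max _ _).trans (max_le (hg i) (hy i))

theorem norm_mul_volume_linearForm_le (u : ι → Ω) (i : ι) {s : ℝ} (hs : 0 ≤ s) :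
    ‖u i‖ₑ * volume {c : ι → ℤ_[p] | ‖u ⬝ᵥ (padicIntEmb Ω ∘ c)‖ ≤ s} ≤ ENNReal.ofReal s := by
  classical
  have hdet : ((1 : Matrix ι ι Ω).updateRow i u).det = u i := by
    rw [← Matrix.cramer_transpose_apply, Matrix.transpose_one, Matrix.cramer_one]
    rfl
  have hr (j : ι) : 0 ≤ Function.update (1 : ι → ℝ) i s j := by
    rcases eq_or_ne j i with rfl | hj <;> simp [*]
  have h := norm_det_mul_volume_linear_le (p := p) ((1 : Matrix ι ι Ω).updateRow i u) hr
  rw [hdet, Finset.prod_update_of_mem (Finset.mem_univ i)] at h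
  simp only [Pi.one_apply, Finset.prod_const_one, mul_one] at h
  refine le_trans (mul_le_mul_right (measure_mono fun c hc j => ?_) _) h
  rcases eq_or_ne j i with rfl | hj
  · simpa [Matrix.mulVec] using hc
  · have hrow : ((1 : Matrix ι ι Ω).updateRow i u).mulVec (padicIntEmb Ω ∘ c) j =
        padicIntEmb Ω (c j) := by
      simp [Matrix.mulVec, hj, dotProduct, Matrix.one_apply]
    simpa [hrow, hj, norm_padicIntEmb] using PadicInt.norm_le_one (c j)

end LinearFormVolume

section Krylov

open Matrix Polynomial

variable {R : Type*} [CommRing R] {n : ℕ}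

/-- The Krylov matrix `[w, N w, …, N ^ (n - 1) w]` of a square matrix and a vector. -/
def krylovMatrix (N : Matrix (Fin n) (Fin n) R) (w : Fin n → R) : Matrix (Fin n) (Fin n) R :=
  .of fun i j => (N ^ (j : ℕ) *ᵥ w) i

theorem det_krylovMatrix_smul (N : Matrix (Fin n) (Fin n) R) (w : Fin n → R) (c : R) :
    (krylovMatrix N (c • w)).det = c ^ n * (krylovMatrix N w).det := by
  have hsmul : krylovMatrix N (c • w) = c • krylovMatrix N w := by
    ext
    simp [krylovMatrix, mulVec_smul]
  rw [hsmul, det_smul, Fintype.card_fin]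

theorem krylovMatrix_mulVec {N N' g : Matrix (Fin n) (Fin n) R} (h : SemiconjBy g N' N)
    (w : Fin n → R) : krylovMatrix N (g *ᵥ w) = g * krylovMatrix N' w := by
  ext i j
  simp only [krylovMatrix, of_apply]
  rw [mulVec_mulVec, ← (h.pow_right j).eq, ← mulVec_mulVec, mul_apply]
  rfl

theorem det_aeval_mulVec_eq_det_krylovMatrix (N : Matrix (Fin n) (Fin n) R) (w : Fin n → R)
    {P : Fin n → R[X]} (hdeg : ∀ j, (P j).natDegree = j) (hmonic : ∀ j, (P j).Monic) :
    (of fun i j => (aeval N (P j) *ᵥ w) i).det = (krylovMatrix N w).det := by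
  have hmul : of (fun i j => (aeval N (P j) *ᵥ w) i) =
      krylovMatrix N w * of fun i j : Fin n => (P j).coeff i := by
    ext i j
    rw [of_apply, aeval_eq_sum_range' ((hdeg j).trans_lt j.2), sum_mulVec, Finset.sum_apply,
      ← Fin.sum_univ_eq_sum_range (fun k => (((P j).coeff k • N ^ k) *ᵥ w) i), mul_apply]
    simp [krylovMatrix, smul_mulVec, mul_comm]
  rw [hmul, det_mul, det_matrixOfPolynomials P hdeg hmonic, mul_one]

theorem det_eq_det_krylovMatrix_of_recursion {N : Matrix (Fin n) (Fin n) R} {w : Fin n → R}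
    {q : ℕ → Fin n → R} {u : ℕ → R} (h0 : q 0 = w)
    (hsucc : ∀ j, q (j + 1) = N *ᵥ q j + u j • w) :
    (of fun i j : Fin n => q j i).det = (krylovMatrix N w).det := by
  nontriviality R
  let P (j : ℕ) : R[X] := Nat.rec 1 (fun j (f : R[X]) => X * f + C (u j)) j
  have hP (j : ℕ) : (P j).natDegree = j ∧ (P j).Monic ∧ aeval N (P j) *ᵥ w = q j := by
    induction j with
    | zero => simp [P, h0]
    | succ j ih =>
      obtain ⟨hdeg, hmonic, hq⟩ := ih
      have hXdeg : ((X : R[X]) * P j).natDegree = j + 1 := by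
        rw [natDegree_X_mul hmonic.ne_zero, hdeg]
      refine ⟨(natDegree_add_C (p := X * P j)).trans hXdeg, ?_, ?_⟩
      · refine (monic_X.mul hmonic).add_of_left (degree_C_le.trans_lt ?_)
        rw [degree_eq_natDegree (monic_X.mul hmonic).ne_zero, hXdeg]
        exact_mod_cast j.succ_pos
      · change aeval N (X * P j + C (u j)) *ᵥ w = _
        rw [map_add, map_mul, aeval_X, aeval_C, add_mulVec, ← mulVec_mulVec, hq, hsucc,
          Algebra.algebraMap_eq_smul_one, smul_mulVec, one_mulVec]
  simp only [← (hP _).2.2]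
  exact det_aeval_mulVec_eq_det_krylovMatrix N w (fun j => (hP j).1) fun j => (hP j).2.1

theorem det_krylovMatrix_add_vecMulVec (N : Matrix (Fin n) (Fin n) R) (w a : Fin n → R) :
    (krylovMatrix (N + vecMulVec w a) w).det = (krylovMatrix N w).det :=
  det_eq_det_krylovMatrix_of_recursion (q := fun j => (N + vecMulVec w a) ^ j *ᵥ w)
    (u := fun j => a ⬝ᵥ (N + vecMulVec w a) ^ j *ᵥ w) (by simp) fun j => by
      rw [pow_succ', ← mulVec_mulVec, add_mulVec, vecMulVec_mulVec]
      simp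

theorem det_krylovMatrix_single_zero (M : Matrix (Fin (n + 1)) (Fin (n + 1)) R) :
    (krylovMatrix M (Pi.single 0 1)).det =
      (krylovMatrix (M.submatrix Fin.succ Fin.succ) fun i => M i.succ 0).det := by
  rw [← det_eq_det_krylovMatrix_of_recursion
    (q := fun j i => (M ^ (j + 1) *ᵥ Pi.single 0 1) i.succ)
    (u := fun j => (M ^ (j + 1) *ᵥ Pi.single 0 1) 0)]
  · rw [det_succ_column_zero, Finset.sum_eq_single 0]
    · simp [krylovMatrix, submatrix]
    · intro i _ hi
      simp [krylovMatrix, hi]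
    · simp
  · ext i
    simp
  · intro j
    ext i
    rw [pow_succ', ← mulVec_mulVec]
    simp [mulVec, dotProduct, Fin.sum_univ_succ, mul_comm, add_comm]

theorem coeff_iterate_divX (f : R[X]) (k m : ℕ) : (divX^[k] f).coeff m = f.coeff (m + k) := by
  induction k generalizing m with
  | zero => rfl
  | succ k ih => rw [Function.iterate_succ_apply', coeff_divX, ih, add_right_comm, add_assoc]

theorem natDegree_iterate_divX (f : R[X]) (k : ℕ) :
    (divX^[k] f).natDegree = f.natDegree - k := by
  induction k with
  | zero => rfl
  | succ k ih =>
    rw [Function.iterate_succ_apply', natDegree_divX_eq_natDegree_tsub_one, ih, Nat.sub_sub]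

theorem monic_iterate_divX {f : R[X]} (hf : f.Monic) {k : ℕ} (hk : k ≤ f.natDegree) :
    (divX^[k] f).Monic := by
  rw [Monic, leadingCoeff, natDegree_iterate_divX, coeff_iterate_divX, Nat.sub_add_cancel hk]
  exact hf

/-- The vectors `v k` with `adjugate (X - N) b = ∑ k < n, X ^ k • v (k + 1)`, obtained by applying
to `b` the quotients of the characteristic polynomial of `N` by the powers of `X`. -/
noncomputable def hornerVec (N : Matrix (Fin n) (Fin n) R) (b : Fin n → R) (k : ℕ) : Fin n → R :=
  aeval N (divX^[k] N.charpoly) *ᵥ b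

theorem hornerVec_zero (N : Matrix (Fin n) (Fin n) R) (b : Fin n → R) : hornerVec N b 0 = 0 := by
  rw [hornerVec, Function.iterate_zero_apply, aeval_self_charpoly, zero_mulVec]

theorem hornerVec_eq_mulVec_succ_add (N : Matrix (Fin n) (Fin n) R) (b : Fin n → R) (k : ℕ) :
    hornerVec N b k = N *ᵥ hornerVec N b (k + 1) + N.charpoly.coeff k • b := by
  rw [hornerVec, hornerVec, ← X_mul_divX_add (divX^[k] N.charpoly), coeff_iterate_divX, zero_add,
    ← Function.iterate_succ_apply' divX, map_add, map_mul, aeval_X, aeval_C, add_mulVec,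
    mulVec_mulVec, Algebra.algebraMap_eq_smul_one, smul_mulVec, one_mulVec]

theorem natDegree_charpoly_fin [Nontrivial R] (N : Matrix (Fin n) (Fin n) R) :
    N.charpoly.natDegree = n := by
  rw [charpoly_natDegree_eq_dim, Fintype.card_fin]

theorem hornerVec_self [Nontrivial R] (N : Matrix (Fin n) (Fin n) R) (b : Fin n → R) :
    hornerVec N b n = b := by
  have hone : divX^[n] N.charpoly = 1 := by
    rw [← (monic_iterate_divX N.charpoly_monic (natDegree_charpoly_fin N).ge).natDegree_eq_zero,
      natDegree_iterate_divX, natDegree_charpoly_fin, Nat.sub_self]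
  rw [hornerVec, hone, map_one, one_mulVec]

/-- Up to the sign of the order-reversing permutation this is a Krylov determinant, because the
quotients of the characteristic polynomial by powers of `X` are monic of every degree below `n`. -/
theorem exists_det_hornerVec_eq (N : Matrix (Fin n) (Fin n) R) (b : Fin n → R) :
    ∃ s : ℤˣ, (of fun k : Fin n => hornerVec N b (k + 1)).det =
      (s : ℤ) * (krylovMatrix N b).det := by
  nontriviality R
  refine ⟨Equiv.Perm.sign (Fin.revPerm (n := n)), ?_⟩
  have hdeg (j : Fin n) : (divX^[(j.rev : ℕ) + 1] N.charpoly).natDegree = j := by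
    rw [natDegree_iterate_divX, natDegree_charpoly_fin, Fin.val_rev]
    lia
  have hmonic (j : Fin n) : (divX^[(j.rev : ℕ) + 1] N.charpoly).Monic :=
    monic_iterate_divX N.charpoly_monic ((natDegree_charpoly_fin N).symm ▸ j.rev.2)
  have hrev : (of fun k : Fin n => hornerVec N b (k + 1)) =
      (of fun i j : Fin n => hornerVec N b (j.rev + 1) i)ᵀ.submatrix Fin.revPerm id := by
    ext k l
    simp [-Fin.val_rev]
  rw [hrev, det_permute, det_transpose]
  exact congrArg _ (det_aeval_mulVec_eq_det_krylovMatrix N b hdeg hmonic)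

theorem charmatrix_mulVec_sum_hornerVec (N : Matrix (Fin n) (Fin n) R) (b : Fin n → R) :
    (N.charmatrix *ᵥ fun i => ∑ k ∈ Finset.range n, (X : R[X]) ^ k * C (hornerVec N b (k + 1) i)) =
      N.charpoly • (C ∘ b) := by
  nontriviality R
  have hmul (v : Fin n → R) : N.charmatrix *ᵥ (C ∘ v) = (X : R[X]) • (C ∘ v) - C ∘ (N *ᵥ v) := by
    rw [charmatrix, sub_mulVec, scalar_apply, diagonal_const_mulVec]
    congr 1
    ext1 i
    simp [mulVec, dotProduct]
  have hterm (k : ℕ) : N.charmatrix *ᵥ ((X : R[X]) ^ k • (C ∘ hornerVec N b (k + 1))) =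
      ((X : R[X]) ^ (k + 1) • (C ∘ hornerVec N b (k + 1)) -
        (X : R[X]) ^ k • (C ∘ hornerVec N b k)) + (C (N.charpoly.coeff k) * X ^ k) • (C ∘ b) := by
    rw [mulVec_smul, hmul, hornerVec_eq_mulVec_succ_add N b k]
    ext1 i
    simp
    ring
  have hsum : (fun i => ∑ k ∈ Finset.range n, (X : R[X]) ^ k * C (hornerVec N b (k + 1) i)) =
      ∑ k ∈ Finset.range n, (X : R[X]) ^ k • (C ∘ hornerVec N b (k + 1)) := by
    ext1 i
    simp
  have hchar : N.charpoly = X ^ n + ∑ k ∈ Finset.range n, C (N.charpoly.coeff k) * X ^ k := by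
    conv_lhs => rw [N.charpoly_monic.as_sum, natDegree_charpoly_fin]
  rw [hsum, mulVec_sum, Finset.sum_congr rfl fun k _ => hterm k, Finset.sum_add_distrib,
    Finset.sum_range_sub fun k => (X : R[X]) ^ k • (C ∘ hornerVec N b k), hornerVec_zero,
    hornerVec_self, ← Finset.sum_smul]
  conv_rhs => rw [hchar, add_smul]
  simp [Function.comp_def, ← Pi.zero_def]

theorem charpoly_add_vecMulVec {N : Matrix (Fin n) (Fin n) R} {b : Fin n → R}
    (a : Fin n → R) {Q : Fin n → R[X]} (hQ : N.charmatrix *ᵥ Q = N.charpoly • (C ∘ b)) :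
    (N + vecMulVec b a).charpoly = N.charpoly - (C ∘ a) ⬝ᵥ Q := by
  rcases n with _ | n
  · simp [charpoly, dotProduct]
  have hcharmatrix : (N + vecMulVec b a).charmatrix =
      N.charmatrix - vecMulVec (C ∘ b) (C ∘ a) := by
    ext1 i j
    simp [charmatrix_apply, vecMulVec_apply, sub_sub]
  have hfactor : N.charpoly • (N + vecMulVec b a).charmatrix =
      N.charmatrix * (scalar (Fin (n + 1)) N.charpoly - vecMulVec Q (C ∘ a)) := by
    rw [hcharmatrix, mul_sub, mul_vecMulVec, hQ, smul_sub, smul_vecMulVec]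
    congr 1
    ext1 i j
    simp [scalar_apply, mul_comm]
  have hdet := congrArg det hfactor
  rw [det_smul, det_mul, ← eval_charpoly, charpoly_vecMulVec, Fintype.card_fin] at hdet
  simp only [eval_sub, eval_pow, eval_X, eval_smul, smul_eq_mul, Nat.add_sub_cancel] at hdet
  refine (N.charpoly_monic.pow (n + 1)).isRegular.left ?_
  calc N.charpoly ^ (n + 1) * (N + vecMulVec b a).charpoly
      = N.charpoly * (N.charpoly ^ (n + 1) - Q ⬝ᵥ (C ∘ a) * N.charpoly ^ n) := hdet
    _ = N.charpoly ^ (n + 1) * (N.charpoly - (C ∘ a) ⬝ᵥ Q) := by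
      rw [dotProduct_comm]
      ring

theorem charpoly_coeff_add_vecMulVec (N : Matrix (Fin n) (Fin n) R) (b a : Fin n → R)
    (k : Fin n) : (N + vecMulVec b a).charpoly.coeff k =
      N.charpoly.coeff k - hornerVec N b (k + 1) ⬝ᵥ a := by
  rw [charpoly_add_vecMulVec a (charmatrix_mulVec_sum_hornerVec N b), coeff_sub]
  simp only [dotProduct, finsetSum_coeff, Function.comp_apply]
  congr 1
  refine Finset.sum_congr rfl fun i _ => ?_
  rw [mul_comm, coeff_mul_C, finsetSum_coeff]
  simp [coeff_X_pow]

end Krylov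

section NegativeMoments

theorem lintegral_ofReal_rpow_neg_lt_top {α : Type*} [MeasurableSpace α] {ν : Measure α}
    {g : α → ℝ} (hg : Measurable g) {q : ℝ} (hq : 1 < q)
    (hval : ∀ x, g x = 0 ∨ ∃ j : ℕ, g x = q ^ (-(j : ℝ))) {E : ℝ≥0∞} (hE : E < ⊤) {s s' : ℝ}
    (hs : 0 < s) (hss' : s < s')
    (hvol : ∀ v, 0 < v → ν {x | g x = v} ≤ E * ENNReal.ofReal (v ^ s')) :
    ∫⁻ x, ENNReal.ofReal (g x ^ (-s)) ∂ν < ⊤ := by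
  have hq0 : 0 < q := one_pos.trans hq
  let T (j : ℕ) : Set α := {x | g x = q ^ (-(j : ℝ))}
  have hT (j : ℕ) : MeasurableSet (T j) := hg (measurableSet_singleton _)
  have hpt (x : α) : ENNReal.ofReal (g x ^ (-s)) ≤
      ∑' j : ℕ, (T j).indicator (fun _ => ENNReal.ofReal (q ^ ((j : ℝ) * s))) x := by
    rcases hval x with h | ⟨j, h⟩
    · simp [h, Real.zero_rpow (neg_ne_zero.2 hs.ne')]
    · refine le_trans (le_of_eq ?_) (ENNReal.le_tsum j)
      rw [Set.indicator_of_mem (show x ∈ T j from h), h, ← Real.rpow_mul hq0.le, neg_mul_neg]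
  have hterm (j : ℕ) : ENNReal.ofReal (q ^ ((j : ℝ) * s)) * ν (T j) ≤
      E * ENNReal.ofReal (q ^ (s - s')) ^ j := by
    refine (mul_le_mul_right (hvol _ (by positivity)) _).trans (le_of_eq ?_)
    rw [mul_left_comm, ← ENNReal.ofReal_mul (by positivity), ← ENNReal.ofReal_pow (by positivity),
      ← Real.rpow_mul hq0.le, ← Real.rpow_add hq0, ← Real.rpow_natCast, ← Real.rpow_mul hq0.le]
    ring_nf
  calc ∫⁻ x, ENNReal.ofReal (g x ^ (-s)) ∂ν
      ≤ ∫⁻ x, ∑' j : ℕ, (T j).indicator (fun _ => ENNReal.ofReal (q ^ ((j : ℝ) * s))) x ∂ν :=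
        lintegral_mono hpt
    _ = ∑' j : ℕ, ENNReal.ofReal (q ^ ((j : ℝ) * s)) * ν (T j) := by
        rw [lintegral_tsum fun j => (measurable_const.indicator (hT j)).aemeasurable]
        simp [hT]
    _ ≤ ∑' j : ℕ, E * ENNReal.ofReal (q ^ (s - s')) ^ j := ENNReal.tsum_le_tsum hterm
    _ < ⊤ := by
        rw [ENNReal.tsum_mul_left, ENNReal.tsum_geometric]
        refine ENNReal.mul_lt_top hE (ENNReal.inv_lt_top.2 (tsub_pos_of_lt ?_))
        exact ENNReal.ofReal_lt_one.2 (Real.rpow_lt_one_of_one_lt_of_neg hq (sub_neg.2 hss'))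

variable {p : ℕ} [Fact p.Prime] {ι : Type*} [Fintype ι]

theorem padicInt_norm_eq_zero_or_eq_rpow (x : ℤ_[p]) :
    ‖x‖ = 0 ∨ ∃ j : ℕ, ‖x‖ = (p : ℝ) ^ (-(j : ℝ)) := by
  rcases eq_or_ne x 0 with rfl | hx
  · exact .inl norm_zero
  · refine .inr ⟨x.valuation, ?_⟩
    rw [PadicInt.norm_eq_zpow_neg_valuation hx, ← Real.rpow_intCast, Int.cast_neg,
      Int.cast_natCast]

theorem exists_norm_apply_eq_pi_norm [Nonempty ι] {E : Type*} [SeminormedAddCommGroup E]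
    (x : ι → E) : ∃ i, ‖x i‖ = ‖x‖ := by
  obtain ⟨i, hi⟩ := Finite.exists_max fun i => ‖x i‖
  exact ⟨i, (norm_le_pi_norm x i).antisymm ((pi_norm_le_iff_of_nonneg (norm_nonneg _)).2 hi)⟩

theorem padicInt_volume_pi_norm_le_le {r : ℝ} (hr : 0 ≤ r) :
    volume {x : ι → ℤ_[p] | ‖x‖ ≤ r} ≤ ENNReal.ofReal (r ^ Fintype.card ι) := by
  have hpi : {x : ι → ℤ_[p] | ‖x‖ ≤ r} = Set.univ.pi fun _ => {y : ℤ_[p] | ‖y - 0‖ ≤ r} := by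
    ext
    simp [pi_norm_le_iff_of_nonneg hr]
  rw [hpi, volume_pi_pi, ENNReal.ofReal_pow hr, ← Finset.card_univ, ← Finset.prod_const]
  exact Finset.prod_le_prod' fun _ _ => padicInt_volume_norm_sub_le 0 r

theorem padicInt_lintegral_enorm_rpow_neg_lt_top [Nonempty ι] {s : ℝ} (hs : 0 < s)
    (hs' : s < Fintype.card ι) : ∫⁻ x : ι → ℤ_[p], ‖x‖ₑ ^ (-s) < ⊤ := by
  have hne : ∀ᵐ x : ι → ℤ_[p], x ≠ 0 := by
    have h := padicInt_volume_pi_norm_le_le (p := p) (ι := ι) le_rfl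
    rw [zero_pow Fintype.card_ne_zero, ENNReal.ofReal_zero, nonpos_iff_eq_zero] at h
    filter_upwards [compl_mem_ae_iff.2 h] with x hx h0
    exact hx (by simp [h0])
  have hreal : ∀ᵐ x : ι → ℤ_[p], ‖x‖ₑ ^ (-s) = ENNReal.ofReal (‖x‖ ^ (-s)) := by
    filter_upwards [hne] with x hx
    rw [← ofReal_norm, ENNReal.ofReal_rpow_of_pos (norm_pos_iff.2 hx)]
  rw [lintegral_congr_ae hreal]
  refine lintegral_ofReal_rpow_neg_lt_top measurable_norm
    (q := p) (mod_cast (Fact.out : p.Prime).one_lt) (fun x => ?_) ENNReal.one_lt_top hs hs'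
    fun v hv => ?_
  · obtain ⟨i, hi⟩ := exists_norm_apply_eq_pi_norm x
    rw [← hi]
    exact padicInt_norm_eq_zero_or_eq_rpow (x i)
  · rw [one_mul, Real.rpow_natCast]
    exact (measure_mono fun x hx => le_of_eq hx).trans (padicInt_volume_pi_norm_le_le hv.le)

theorem padicInt_exists_eq_smul_mulVec_single {n : ℕ} (b : Fin (n + 1) → ℤ_[p]) :
    ∃ (c : ℤ_[p]) (h : (Matrix (Fin (n + 1)) (Fin (n + 1)) ℤ_[p])ˣ), ‖c‖ₑ = ‖b‖ₑ ∧
      b = c • h.val *ᵥ Pi.single 0 1 := by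
  rcases eq_or_ne b 0 with rfl | hb
  · exact ⟨0, 1, by simp, by simp⟩
  obtain ⟨i₀, hi₀⟩ := exists_norm_apply_eq_pi_norm b
  have hc : b i₀ ≠ 0 := by rwa [← norm_ne_zero_iff, hi₀, norm_ne_zero_iff]
  choose v hv using fun i => padicInt_dvd_iff_norm_le.2 (hi₀ ▸ norm_le_pi_norm b i)
  have hv₀ : v i₀ = 1 := mul_left_cancel₀ hc ((hv i₀).symm.trans (mul_one _).symm)
  have hunit : IsUnit (((1 : Matrix (Fin (n + 1)) (Fin (n + 1)) ℤ_[p]).updateCol i₀ v).submatrix id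
      (Equiv.swap 0 i₀)) := by
    rw [Matrix.isUnit_iff_isUnit_det, Matrix.det_permute', ← Matrix.cramer_apply,
      Matrix.cramer_one, Module.End.one_apply, hv₀, mul_one]
    exact (Equiv.Perm.sign (Equiv.swap 0 i₀)).isUnit.map (Int.castRingHom ℤ_[p])
  refine ⟨b i₀, hunit.unit, by rw [← ofReal_norm, ← ofReal_norm, hi₀], ?_⟩
  ext i
  simp [hv i]

end NegativeMoments

section MatrixVolume

variable {m n α : Type*}

instance matrix_secondCountableTopology [Finite m] [Finite n] [TopologicalSpace α]
    [SecondCountableTopology α] : SecondCountableTopology (Matrix m n α) :=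
  inferInstanceAs (SecondCountableTopology (m → n → α))

instance matrix_compactSpace [TopologicalSpace α] [CompactSpace α] : CompactSpace (Matrix m n α) :=
  inferInstanceAs (CompactSpace (m → n → α))

instance matrix_locallyCompactSpace [Finite m] [Finite n] [TopologicalSpace α]
    [LocallyCompactSpace α] : LocallyCompactSpace (Matrix m n α) :=
  inferInstanceAs (LocallyCompactSpace (m → n → α))

variable [Fintype m] [Fintype n]

noncomputable instance matrixMeasureSpace [MeasureSpace α] : MeasureSpace (Matrix m n α) :=
  inferInstanceAs (MeasureSpace (m → n → α))

instance matrix_borelSpace [TopologicalSpace α] [SecondCountableTopology α] [MeasureSpace α]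
    [BorelSpace α] : BorelSpace (Matrix m n α) :=
  inferInstanceAs (BorelSpace (m → n → α))

instance matrix_volume_isProbabilityMeasure [MeasureSpace α]
    [IsProbabilityMeasure (volume : Measure α)] :
    IsProbabilityMeasure (volume : Measure (Matrix m n α)) :=
  inferInstanceAs (IsProbabilityMeasure (volume : Measure (m → n → α)))

instance matrix_volume_isAddHaarMeasure [AddGroup α] [TopologicalSpace α] [IsTopologicalAddGroup α]
    [SecondCountableTopology α] [MeasureSpace α] [BorelSpace α] [SigmaFinite (volume : Measure α)]
    [(volume : Measure α).IsAddHaarMeasure] :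
    (volume : Measure (Matrix m n α)).IsAddHaarMeasure :=
  inferInstanceAs (volume : Measure (m → n → α)).IsAddHaarMeasure

end MatrixVolume

section KrylovMoments

open Matrix

variable {p : ℕ} [Fact p.Prime] {m n : ℕ}

@[fun_prop]
theorem continuous_krylovMatrix {X R : Type*} [TopologicalSpace X] [CommRing R]
    [TopologicalSpace R] [IsTopologicalRing R] {N : X → Matrix (Fin n) (Fin n) R}
    {w : X → Fin n → R} (hN : Continuous N) (hw : Continuous w) :
    Continuous fun x => krylovMatrix (N x) (w x) :=
  continuous_matrix fun i j => (continuous_apply i).comp ((hN.pow j).matrix_mulVec hw)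

theorem padicInt_enorm_eq_one_of_isUnit {x : ℤ_[p]} (hx : IsUnit x) : ‖x‖ₑ = 1 := by
  rw [← ofReal_norm, PadicInt.isUnit_iff.1 hx, ENNReal.ofReal_one]

theorem padicInt_enorm_det_unit_mul (h : (Matrix (Fin n) (Fin n) ℤ_[p])ˣ)
    (M : Matrix (Fin n) (Fin n) ℤ_[p]) : ‖(h.val * M).det‖ₑ = ‖M.det‖ₑ := by
  rw [det_mul, enorm_mul, padicInt_enorm_eq_one_of_isUnit
    ((isUnit_iff_isUnit_det _).1 h.isUnit), one_mul]

/-- The linear change of variables of the Krylov recursion: `g` is inserted in the product `Y * X`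
of the two components of `(X, Y)`, then the first column of `Y` and the first row of `X` are split
off. The output is `((column of Y, rest of Y, rest of X), row of X)`. -/
noncomputable def splitColRow (g : (Matrix (Fin (n + 1)) (Fin (n + 1)) ℤ_[p])ˣ)
    (x : Matrix (Fin (n + 1)) (Fin m) ℤ_[p] × Matrix (Fin m) (Fin (n + 1)) ℤ_[p]) :
    ((Fin m → ℤ_[p]) × Matrix (Fin m) (Fin n) ℤ_[p] × Matrix (Fin n) (Fin m) ℤ_[p]) ×
      (Fin m → ℤ_[p]) :=
  (((x.2 * g.val) *ᵥ Pi.single 0 1, (x.2 * g.val).submatrix id Fin.succ,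
    (g⁻¹.val * x.1).submatrix Fin.succ id), (g⁻¹.val * x.1) 0)

set_option synthInstance.maxSize 4096 in
theorem measurePreserving_splitColRow (g : (Matrix (Fin (n + 1)) (Fin (n + 1)) ℤ_[p])ˣ) :
    MeasurePreserving (splitColRow (m := m) g) := by
  let φ : (Matrix (Fin (n + 1)) (Fin m) ℤ_[p] × Matrix (Fin m) (Fin (n + 1)) ℤ_[p]) →+
      ((Fin m → ℤ_[p]) × Matrix (Fin m) (Fin n) ℤ_[p] × Matrix (Fin n) (Fin m) ℤ_[p]) ×
        (Fin m → ℤ_[p]) :=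
    AddMonoidHom.mk' (splitColRow g) fun x y => by
      simp only [splitColRow, Prod.fst_add, Prod.snd_add, Matrix.add_mul, Matrix.mul_add,
        add_mulVec]
      rfl
  have hcont : Continuous φ := by
    change Continuous (splitColRow g)
    unfold splitColRow
    fun_prop
  have hsurj : Function.Surjective φ := by
    rintro ⟨⟨b, B, A⟩, a⟩
    refine ⟨(g.val * of (Fin.cons a A), of (fun i => Fin.cons (b i) (B i)) * g⁻¹.val), ?_⟩
    change splitColRow g _ = _
    simp only [splitColRow, Matrix.mul_assoc, Units.inv_mul, Matrix.mul_one,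
      ← Matrix.mul_assoc g⁻¹.val, Matrix.one_mul]
    refine Prod.ext (Prod.ext ?_ (Prod.ext rfl rfl)) rfl
    ext
    simp
  exact AddMonoidHom.measurePreserving hcont hsurj (by simp)

theorem measurePreserving_splitColRow_fst (g : (Matrix (Fin (n + 1)) (Fin (n + 1)) ℤ_[p])ˣ) :
    MeasurePreserving fun x => (splitColRow (m := m) g x).1 :=
  measurePreserving_fst.comp (measurePreserving_splitColRow g)

theorem mul_eq_add_vecMulVec_splitColRow (g : (Matrix (Fin (n + 1)) (Fin (n + 1)) ℤ_[p])ˣ)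
    (x : Matrix (Fin (n + 1)) (Fin m) ℤ_[p] × Matrix (Fin m) (Fin (n + 1)) ℤ_[p]) :
    x.2 * x.1 = (splitColRow g x).1.2.1 * (splitColRow g x).1.2.2 +
      vecMulVec (splitColRow g x).1.1 (splitColRow g x).2 := by
  have hassoc : x.2 * x.1 = x.2 * g.val * (g⁻¹.val * x.1) := by
    simp [Matrix.mul_assoc, ← Matrix.mul_assoc g.val]
  rw [hassoc]
  ext i j
  rw [mul_apply, Fin.sum_univ_succ, add_comm]
  simp [splitColRow, mul_apply, vecMulVec_apply]

theorem enorm_det_krylovMatrix_mul_smul_mulVec (c : ℤ_[p])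
    (g : (Matrix (Fin (n + 1)) (Fin (n + 1)) ℤ_[p])ˣ)
    (x : Matrix (Fin (n + 1)) (Fin m) ℤ_[p] × Matrix (Fin m) (Fin (n + 1)) ℤ_[p]) :
    ‖(krylovMatrix (x.1 * x.2) (c • g.val *ᵥ Pi.single 0 1)).det‖ₑ = ‖c‖ₑ ^ (n + 1) *
      ‖(krylovMatrix ((splitColRow g x).1.2.2 * (splitColRow g x).1.2.1)
        ((splitColRow g x).1.2.2 *ᵥ (splitColRow g x).1.1)).det‖ₑ := by
  have hconj : SemiconjBy g.val (g⁻¹.val * x.1 * (x.2 * g.val)) (x.1 * x.2) := by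
    simp [SemiconjBy, Matrix.mul_assoc, ← Matrix.mul_assoc g.val]
  rw [det_krylovMatrix_smul, enorm_mul, enorm_pow, krylovMatrix_mulVec hconj,
    padicInt_enorm_det_unit_mul, det_krylovMatrix_single_zero]
  congr 4
  ext i
  simp [splitColRow, mulVec, dotProduct, mul_apply]

theorem enorm_det_krylovMatrix_mul_mulVec_smul_mulVec (c : ℤ_[p])
    (g : (Matrix (Fin (n + 1)) (Fin (n + 1)) ℤ_[p])ˣ)
    (x : Matrix (Fin (n + 1)) (Fin m) ℤ_[p] × Matrix (Fin m) (Fin (n + 1)) ℤ_[p]) :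
    ‖(krylovMatrix (x.2 * x.1) (x.2 *ᵥ (c • g.val *ᵥ Pi.single 0 1))).det‖ₑ = ‖c‖ₑ ^ m *
      ‖(krylovMatrix ((splitColRow g x).1.2.1 * (splitColRow g x).1.2.2)
        (splitColRow g x).1.1).det‖ₑ := by
  rw [mulVec_smul, mulVec_mulVec, det_krylovMatrix_smul, enorm_mul, enorm_pow,
    mul_eq_add_vecMulVec_splitColRow g x]
  congr 2
  exact det_krylovMatrix_add_vecMulVec _ _ _

theorem padicInt_lintegral_enorm_rpow_neg_lt_top_of_fiberwise {ι Y Z : Type*} [Fintype ι]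
    [Nonempty ι] [MeasureSpace Y] [SFinite (volume : Measure Y)] [MeasureSpace Z]
    {F : (ι → ℤ_[p]) × Y → ℤ_[p]} (hF : Measurable F) {K : Z → ℤ_[p]} (hK : Measurable K)
    (hfiber : ∀ b, ∃ Φ : Y → Z, MeasurePreserving Φ ∧
      ∀ y, ‖F (b, y)‖ₑ = ‖b‖ₑ ^ Fintype.card ι * ‖K (Φ y)‖ₑ)
    {t : ℝ} (ht : 0 < t) (ht1 : t < 1) (hint : ∫⁻ z, ‖K z‖ₑ ^ (-t) < ⊤) :
    ∫⁻ x, ‖F x‖ₑ ^ (-t) < ⊤ := by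
  have hinner (b : ι → ℤ_[p]) : ∫⁻ y, ‖F (b, y)‖ₑ ^ (-t) =
      ‖b‖ₑ ^ (-(Fintype.card ι * t)) * ∫⁻ z, ‖K z‖ₑ ^ (-t) := by
    obtain ⟨Φ, hΦ, hFΦ⟩ := hfiber b
    have hpow (y : Y) : ‖F (b, y)‖ₑ ^ (-t) =
        ‖b‖ₑ ^ (-(Fintype.card ι * t)) * ‖K (Φ y)‖ₑ ^ (-t) := by
      rw [hFΦ, ENNReal.mul_rpow_of_ne_top (by simp) enorm_ne_top, ← ENNReal.rpow_natCast,
        ← ENNReal.rpow_mul, mul_neg]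
    have hKt : Measurable fun z => ‖K z‖ₑ ^ (-t) := hK.enorm.pow_const _
    simp only [hpow]
    have hKΦ : Measurable fun y => ‖K (Φ y)‖ₑ ^ (-t) := hKt.comp hΦ.measurable
    rw [lintegral_const_mul _ hKΦ, ← hΦ.lintegral_comp hKt]
  rw [Measure.volume_eq_prod, lintegral_prod _ (hF.enorm.pow_const _).aemeasurable]
  simp only [hinner]
  rw [lintegral_mul_const _ (measurable_enorm.pow_const _)]
  have hcard : 0 < (Fintype.card ι : ℝ) := mod_cast Fintype.card_pos
  exact ENNReal.mul_lt_top (padicInt_lintegral_enorm_rpow_neg_lt_top (by positivity)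
    (mul_lt_of_lt_one_right hcard ht1)) hint

theorem lintegral_enorm_det_krylovMatrix_mul_lt_top {t : ℝ} (ht : 0 < t) (ht1 : t < 1) (n : ℕ) :
    ∫⁻ z : (Fin (n + 1) → ℤ_[p]) × Matrix (Fin (n + 1)) (Fin n) ℤ_[p] ×
      Matrix (Fin n) (Fin (n + 1)) ℤ_[p],
      ‖(krylovMatrix (z.2.1 * z.2.2) z.1).det‖ₑ ^ (-t) < ⊤ := by
  let K (k m : ℕ) (z : (Fin k → ℤ_[p]) × Matrix (Fin k) (Fin m) ℤ_[p] ×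
      Matrix (Fin m) (Fin k) ℤ_[p]) : ℤ_[p] := (krylovMatrix (z.2.1 * z.2.2) z.1).det
  let K' (k : ℕ) (z : (Fin k → ℤ_[p]) × Matrix (Fin k) (Fin k) ℤ_[p] ×
      Matrix (Fin k) (Fin k) ℤ_[p]) : ℤ_[p] := (krylovMatrix (z.2.2 * z.2.1) (z.2.2 *ᵥ z.1)).det
  have hK (k m : ℕ) : Measurable (K k m) := by
    refine Continuous.measurable ?_
    fun_prop
  have hK' (k : ℕ) : Measurable (K' k) := by
    refine Continuous.measurable ?_
    fun_prop
  have hleft (k : ℕ) (h : ∫⁻ z, ‖K' k z‖ₑ ^ (-t) < ⊤) : ∫⁻ z, ‖K (k + 1) k z‖ₑ ^ (-t) < ⊤ := by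
    refine padicInt_lintegral_enorm_rpow_neg_lt_top_of_fiberwise (hK _ _) (hK' _)
      (fun b => ?_) ht ht1 h
    obtain ⟨c, g, hc, rfl⟩ := padicInt_exists_eq_smul_mulVec_single b
    refine ⟨_, measurePreserving_splitColRow_fst g, fun x => ?_⟩
    rw [← hc, Fintype.card_fin]
    exact enorm_det_krylovMatrix_mul_smul_mulVec c g x
  have hright (k : ℕ) (h : ∫⁻ z, ‖K (k + 1) k z‖ₑ ^ (-t) < ⊤) :
      ∫⁻ z, ‖K' (k + 1) z‖ₑ ^ (-t) < ⊤ := by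
    refine padicInt_lintegral_enorm_rpow_neg_lt_top_of_fiberwise (hK' _) (hK _ _)
      (fun a => ?_) ht ht1 h
    obtain ⟨c, g, hc, rfl⟩ := padicInt_exists_eq_smul_mulVec_single a
    refine ⟨_, measurePreserving_splitColRow_fst g, fun x => ?_⟩
    rw [← hc, Fintype.card_fin]
    exact enorm_det_krylovMatrix_mul_mulVec_smul_mulVec c g x
  induction n with
  | zero => exact hleft 0 (by simp [K'])
  | succ n ih => exact hleft (n + 1) (hright n ih)

end KrylovMoments

section CharpolyPushforward

open Matrix

variable {p : ℕ} [Fact p.Prime] {n : ℕ}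

@[fun_prop]
theorem continuous_charpoly_coeff {X R ι : Type*} [TopologicalSpace X] [CommRing R]
    [TopologicalSpace R] [IsTopologicalRing R] [Fintype ι] [DecidableEq ι] {M : X → Matrix ι ι R}
    (hM : Continuous M) (k : ℕ) : Continuous fun x => (M x).charpoly.coeff k := by
  have huniv (x : X) : (M x).charpoly.coeff k =
      MvPolynomial.eval (fun ij : ι × ι => M x ij.1 ij.2) ((charpoly.univ R ι).coeff k) :=
    (charpoly.univ_coeff_eval₂Hom ι (RingHom.id R) (fun ij => M x ij.1 ij.2) k).symm
  simp only [huniv]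
  exact (MvPolynomial.continuous_eval _).comp (continuous_pi fun ij => hM.matrix_elem _ _)

theorem ennreal_le_rpow_neg_mul_rpow {d v w : ℝ≥0∞} {t : ℝ} (hd : d ≠ 0) (hd' : d ≠ ⊤)
    (hv : v ≤ 1) (hw : d * v ≤ w) (ht : 0 ≤ t) (ht1 : t ≤ 1) : v ≤ d ^ (-t) * w ^ t :=
  calc v = v ^ (1 : ℝ) := (ENNReal.rpow_one v).symm
    _ ≤ v ^ t := ENNReal.rpow_le_rpow_of_exponent_ge hv ht1
    _ = (d⁻¹ * (d * v)) ^ t := by rw [ENNReal.inv_mul_cancel_left hd hd']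
    _ ≤ (d⁻¹ * w) ^ t := by gcongr
    _ = d ^ (-t) * w ^ t := by
      rw [ENNReal.mul_rpow_of_nonneg _ _ ht, ENNReal.inv_rpow, ENNReal.rpow_neg]

theorem enorm_det_krylovMatrix_mul_volume_charpoly_le (N : Matrix (Fin n) (Fin n) ℤ_[p])
    (b : Fin n → ℤ_[p]) (S : Set (Fin n → ℤ_[p])) :
    ‖(krylovMatrix N b).det‖ₑ *
      volume {a | (fun k : Fin n => (N + vecMulVec b a).charpoly.coeff k) ∈ S} ≤ volume S := by
  let H : Matrix (Fin n) (Fin n) ℤ_[p] := of fun k => hornerVec N b (k + 1)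
  have hdet : ‖LinearMap.det (toLin' H)‖ₑ = ‖(krylovMatrix N b).det‖ₑ := by
    obtain ⟨s, hs⟩ := exists_det_hornerVec_eq N b
    have hsign : ‖((s : ℤ) : ℤ_[p])‖ₑ = 1 :=
      padicInt_enorm_eq_one_of_isUnit (s.isUnit.map (Int.castRingHom ℤ_[p]))
    rw [LinearMap.det_toLin', hs, enorm_mul, hsign, one_mul]
  have hset : {a | (fun k : Fin n => (N + vecMulVec b a).charpoly.coeff k) ∈ S} =
      toLin' H ⁻¹' ((fun x => (fun k : Fin n => N.charpoly.coeff k) - x) ⁻¹' S) := by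
    ext a
    simp only [charpoly_coeff_add_vecMulVec]
    rfl
  rw [← hdet, hset]
  exact (padicInt_enorm_det_mul_volume_preimage_le _ _).trans_eq
    ((Measure.measurePreserving_sub_left volume _).measure_preimage_equiv
      (f := MeasurableEquiv.subLeft _) S)

theorem volume_preimage_le_lintegral_rpow_neg_mul {Y W Z : Type*} [MeasureSpace Y]
    [SFinite (volume : Measure Y)] [MeasureSpace W] [IsProbabilityMeasure (volume : Measure W)]
    [MeasureSpace Z] {χ : Y × W → Z} (hχ : Measurable χ) {D : Y → ℝ≥0∞} (hD : Measurable D)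
    (hD' : ∀ y, D y ≠ ⊤) {S : Set Z} (hS : MeasurableSet S)
    (hslice : ∀ y, D y * volume {w | χ (y, w) ∈ S} ≤ volume S) {t : ℝ} (ht : 0 < t) (ht1 : t < 1)
    (hint : ∫⁻ y, D y ^ (-t) < ⊤) :
    volume (χ ⁻¹' S) ≤ (∫⁻ y, D y ^ (-t)) * volume S ^ t := by
  have hDt : Measurable fun y => D y ^ (-t) := hD.pow_const _
  rw [← lintegral_mul_const _ hDt, Measure.volume_eq_prod, Measure.prod_apply (hχ hS)]
  refine lintegral_mono_ae ?_
  filter_upwards [ae_lt_top hDt hint.ne] with y hy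
  refine ennreal_le_rpow_neg_mul_rpow (fun h0 => ?_) (hD' y) prob_le_one (hslice y) ht.le ht1.le
  simp [h0, ht] at hy

theorem exists_volume_charpoly_mul_mem_le {t : ℝ} (ht : 0 < t) (ht1 : t < 1) (n : ℕ) :
    ∃ E : ℝ≥0∞, E < ⊤ ∧ ∀ S : Set (Fin (n + 1) → ℤ_[p]),
      volume {x : Matrix (Fin (n + 1)) (Fin (n + 1)) ℤ_[p] ×
          Matrix (Fin (n + 1)) (Fin (n + 1)) ℤ_[p] |
        (fun k : Fin (n + 1) => (x.1 * x.2).charpoly.coeff k) ∈ S} ≤ E * volume S ^ t := by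
  have hmoment := lintegral_enorm_det_krylovMatrix_mul_lt_top (p := p) ht ht1 n
  refine ⟨_, hmoment, fun S₀ => ?_⟩
  rw [← measure_toMeasurable S₀]
  have hS := measurableSet_toMeasurable volume S₀
  set S := toMeasurable volume S₀
  let χ (z : ((Fin (n + 1) → ℤ_[p]) × Matrix (Fin (n + 1)) (Fin n) ℤ_[p] ×
      Matrix (Fin n) (Fin (n + 1)) ℤ_[p]) × (Fin (n + 1) → ℤ_[p])) (k : Fin (n + 1)) : ℤ_[p] :=
    (z.1.2.1 * z.1.2.2 + vecMulVec z.1.1 z.2).charpoly.coeff k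
  have hχ : Measurable χ := by
    refine Continuous.measurable ?_
    fun_prop
  have hD : Measurable fun z : (Fin (n + 1) → ℤ_[p]) × Matrix (Fin (n + 1)) (Fin n) ℤ_[p] ×
      Matrix (Fin n) (Fin (n + 1)) ℤ_[p] => ‖(krylovMatrix (z.2.1 * z.2.2) z.1).det‖ₑ := by
    refine Continuous.measurable ?_
    fun_prop
  calc _ ≤ volume (splitColRow 1 ⁻¹' (χ ⁻¹' S)) := by
        refine measure_mono fun x hx => subset_toMeasurable _ _ ?_
        simp only [χ, ← mul_eq_add_vecMulVec_splitColRow, charpoly_mul_comm x.2]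
        exact hx
    _ = volume (χ ⁻¹' S) :=
        (measurePreserving_splitColRow 1).measure_preimage (hχ hS).nullMeasurableSet
    _ ≤ _ := volume_preimage_le_lintegral_rpow_neg_mul hχ hD (fun _ => enorm_ne_top) hS
        (fun _ => enorm_det_krylovMatrix_mul_volume_charpoly_le _ _ S) ht ht1 hmoment

end CharpolyPushforward

section RootDiscriminant

variable {Ω ι : Type*}

/-- The absolute value `∏_{a ≠ b} ‖z a - z b‖` of the discriminant of `∏ a, (X - z a)`, each
unordered pair contributing twice. -/
noncomputable def normDisc [Fintype ι] [Norm Ω] [Sub Ω] (z : ι → Ω) : ℝ :=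
  ∏ x ∈ Finset.univ.offDiag, ‖z x.1 - z x.2‖

theorem normDisc_eq_prod_prod_compl [Fintype ι] [DecidableEq ι] [Norm Ω] [Sub Ω] (z : ι → Ω) :
    normDisc z = ∏ a, ∏ b ∈ {a}ᶜ, ‖z a - z b‖ := by
  rw [normDisc, Finset.prod_sigma']
  refine Finset.prod_bij' (fun x _ => ⟨x.1, x.2⟩) (fun x _ => (x.1, x.2)) ?_ ?_ ?_ ?_ ?_ <;>
    simp +contextual [eq_comm]

variable [NormedField Ω]

theorem norm_sub_eq_of_norm_sub_lt [IsUltrametricDist Ω] {z z' : ι → Ω} {η : ℝ}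
    (hη : ∀ a, ‖z a - z' a‖ ≤ η) {a b : ι} (hab : η < ‖z' a - z' b‖) :
    ‖z a - z b‖ = ‖z' a - z' b‖ := by
  have hsplit : z a - z b = (z a - z' a) - (z b - z' b) + (z' a - z' b) := by ring
  have hlt : ‖(z a - z' a) - (z b - z' b)‖ < ‖z' a - z' b‖ :=
    ((norm_sub_le_max _ _).trans (max_le (hη a) (hη b))).trans_lt hab
  rw [hsplit, IsUltrametricDist.norm_add_eq_max_of_norm_ne_norm hlt.ne, max_eq_right hlt.le]

variable [Fintype ι]

theorem normDisc_nonneg (z : ι → Ω) : 0 ≤ normDisc z :=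
  Finset.prod_nonneg fun _ _ => norm_nonneg _

theorem normDisc_ne_zero_iff {z : ι → Ω} : normDisc z ≠ 0 ↔ Function.Injective z := by
  simp only [normDisc, Finset.prod_ne_zero_iff, Finset.mem_offDiag, Finset.mem_univ, true_and,
    norm_ne_zero_iff, sub_ne_zero, Prod.forall]
  exact ⟨fun h a b hab => by_contra fun hne => h a b hne hab, fun h a b hne hab => hne (h hab)⟩

theorem exists_norm_sub_le_normDisc_rpow [Nontrivial ι] (z : ι → Ω) :
    ∃ a b, a ≠ b ∧
      ‖z a - z b‖ ≤ normDisc z ^ ((Finset.univ : Finset ι).offDiag.card : ℝ)⁻¹ := by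
  obtain ⟨a, b, hab⟩ := exists_pair_ne ι
  have hne : (Finset.univ : Finset ι).offDiag.Nonempty := ⟨(a, b), by simpa using hab⟩
  obtain ⟨x, hx, hmin⟩ := Finset.exists_min_image _ (fun x : ι × ι => ‖z x.1 - z x.2‖) hne
  refine ⟨x.1, x.2, (Finset.mem_offDiag.1 hx).2.2, ?_⟩
  rw [Real.le_rpow_inv_iff_of_pos (norm_nonneg _) (normDisc_nonneg z)
    (Nat.cast_pos.2 hne.card_pos), Real.rpow_natCast]
  rw [← Finset.prod_const]
  exact Finset.prod_le_prod (fun _ _ => norm_nonneg _) hmin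

theorem normDisc_le_norm_sub_mul_pow [IsUltrametricDist Ω] {z : ι → Ω} {B : ℝ}
    (hz : ∀ a, ‖z a‖ ≤ B) {a b : ι} (hab : a ≠ b) :
    normDisc z ≤ ‖z a - z b‖ * B ^ ((Finset.univ : Finset ι).offDiag.card - 1) := by
  classical
  have hmem : (a, b) ∈ (Finset.univ : Finset ι).offDiag := by simpa using hab
  rw [normDisc, ← Finset.mul_prod_erase _ _ hmem, ← Finset.card_erase_of_mem hmem]
  refine mul_le_mul_of_nonneg_left ?_ (norm_nonneg _)
  rw [← Finset.prod_const]
  exact Finset.prod_le_prod (fun _ _ => norm_nonneg _)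
    fun x _ => (norm_sub_le_max _ _).trans (max_le (hz _) (hz _))

theorem norm_det_vandermonde_sq {n : ℕ} (x : Fin n → Ω) :
    ‖(Matrix.vandermonde x).det‖ ^ 2 = normDisc x := by
  rw [normDisc_eq_prod_prod_compl, ← Finset.prod_prod_Ioi_mul_eq_prod_prod_off_diag,
    Matrix.det_vandermonde, norm_prod, ← Finset.prod_pow]
  refine Finset.prod_congr rfl fun i _ => ?_
  rw [norm_prod, ← Finset.prod_pow]
  exact Finset.prod_congr rfl fun j _ => by rw [norm_sub_rev (x i) (x j), sq]

theorem prod_norm_sub_mul_prod_norm_add [DecidableEq ι] (y : ι → Ω) (i : ι) :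
    (∏ j ∈ {i}ᶜ, ‖y i - y j‖) * ∏ j, ‖y i + y j‖ = ‖2 * y i‖ * ∏ j ∈ {i}ᶜ, ‖y i ^ 2 - y j ^ 2‖ := by
  rw [← Finset.prod_mul_prod_compl {i} fun j => ‖y i + y j‖, Finset.prod_singleton, ← two_mul,
    mul_left_comm, ← Finset.prod_mul_distrib]
  simp only [← norm_mul, sq_sub_sq, mul_comm]

/-- The absolute value of the discriminant of `∏ i, (X ^ 2 - y i ^ 2)`, whose roots are `± y i`. -/
noncomputable def pairDisc (y : ι → Ω) : ℝ :=
  normDisc (Sum.elim y (-y))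

theorem pairDisc_eq (y : ι → Ω) :
    pairDisc y = (∏ i, ‖2 * y i‖) ^ 2 * normDisc (y ^ 2) ^ 2 := by
  classical
  have hl (i : ι) : ({Sum.inl i}ᶜ : Finset (ι ⊕ ι)) = ({i}ᶜ : Finset ι).disjSum Finset.univ := by
    ext (j | j) <;> simp
  have hr (i : ι) : ({Sum.inr i}ᶜ : Finset (ι ⊕ ι)) = Finset.univ.disjSum ({i}ᶜ : Finset ι) := by
    ext (j | j) <;> simp
  have hadd (i j : ι) : ‖-y i - y j‖ = ‖y i + y j‖ := by rw [← norm_neg]; congr 1; ring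
  have hsub (i j : ι) : ‖-y i + y j‖ = ‖y i - y j‖ := by rw [← norm_neg]; congr 1; ring
  simp only [pairDisc, normDisc_eq_prod_prod_compl, Fintype.prod_sum_type, hl, hr,
    Finset.prod_disjSum, Sum.elim_inl, Sum.elim_inr, Pi.neg_apply, sub_neg_eq_add, hadd, hsub,
    Pi.pow_apply]
  simp only [mul_comm (∏ j, ‖y _ + y j‖), prod_norm_sub_mul_prod_norm_add,
    Finset.prod_mul_distrib]
  ring

theorem pairDisc_eq_det {n : ℕ} (y : Fin n → Ω) :
    pairDisc y =
      (∏ i, ‖2 * y i‖) ^ 2 * ‖(Matrix.vandermonde (y ^ 2)).det‖ ^ 4 := by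
  rw [pairDisc_eq, ← norm_det_vandermonde_sq]
  ring

theorem prod_norm_two_mul_mul_norm_det_vandermonde {n : ℕ} (y : Fin n → Ω) :
    (∏ i, ‖2 * y i‖) * ‖(Matrix.vandermonde (y ^ 2)).det‖ =
      (∏ i, ‖2 * y i‖) ^ (1 / 2 : ℝ) * pairDisc y ^ (1 / 4 : ℝ) := by
  set a := ∏ i, ‖2 * y i‖
  have ha : 0 ≤ a := Finset.prod_nonneg fun _ _ => norm_nonneg _
  rw [pairDisc_eq_det, Real.mul_rpow (by positivity) (by positivity),
    ← Real.rpow_natCast a, ← Real.rpow_natCast ‖_‖, ← Real.rpow_mul ha,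
    ← Real.rpow_mul (norm_nonneg _), ← mul_assoc, ← Real.rpow_add_of_nonneg ha] <;> norm_num

end RootDiscriminant

section Slab

variable {p : ℕ} [Fact p.Prime] {Ω : Type*} [NormedField Ω] [NormedAlgebra ℚ_[p] Ω]
  [IsUltrametricDist Ω] {ι κ : Type*} [Fintype ι] [Nontrivial ι] [Fintype κ]

theorem exists_volume_norm_linearForm_le {u : κ → Ω} (hu : u ≠ 0) :
    ∃ C : ℝ, 0 ≤ C ∧ ∀ s, 0 ≤ s →
      volume {c : κ → ℤ_[p] | ‖u ⬝ᵥ (padicIntEmb Ω ∘ c)‖ ≤ s} ≤ ENNReal.ofReal (C * s) := by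
  classical
  obtain ⟨i, hi⟩ := Function.ne_iff.1 hu
  refine ⟨‖u i‖⁻¹, by positivity, fun s hs => ?_⟩
  rw [ENNReal.ofReal_mul (by positivity), ENNReal.ofReal_inv_of_pos (norm_pos_iff.2 hi),
    ofReal_norm, mul_comm, ← div_eq_mul_inv, ENNReal.le_div_iff_mul_le (by simp_all) (by simp),
    mul_comm]
  exact norm_mul_volume_linearForm_le u i hs

theorem exists_volume_normDisc_mulVec_eq_le (Z : Matrix ι κ Ω) :
    ∃ C : ℝ, 0 ≤ C ∧ ∀ v, 0 < v →
      volume {c : κ → ℤ_[p] | normDisc (Z *ᵥ (padicIntEmb Ω ∘ c)) = v} ≤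
        ENNReal.ofReal (C * v ^ ((Finset.univ : Finset ι).offDiag.card : ℝ)⁻¹) := by
  by_cases hZ : Function.Injective Z
  · have hrow (x : ι × ι) : ∃ C : ℝ, 0 ≤ C ∧ (x.1 ≠ x.2 → ∀ s, 0 ≤ s →
        volume {c : κ → ℤ_[p] | ‖(Z x.1 - Z x.2) ⬝ᵥ (padicIntEmb Ω ∘ c)‖ ≤ s} ≤
          ENNReal.ofReal (C * s)) := by
      rcases eq_or_ne x.1 x.2 with hx | hx
      · exact ⟨0, le_rfl, fun h => (h hx).elim⟩
      · obtain ⟨C, hC, h⟩ := exists_volume_norm_linearForm_le (p := p) (sub_ne_zero.2 (hZ.ne hx))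
        exact ⟨C, hC, fun _ => h⟩
    choose C hC0 hC using hrow
    refine ⟨∑ x, C x, Finset.sum_nonneg fun x _ => hC0 x, fun v hv => ?_⟩
    set s := v ^ ((Finset.univ : Finset ι).offDiag.card : ℝ)⁻¹
    have hs : 0 ≤ s := by positivity
    have hcover : {c : κ → ℤ_[p] | normDisc (Z *ᵥ (padicIntEmb Ω ∘ c)) = v} ⊆
        ⋃ x ∈ (Finset.univ : Finset ι).offDiag,
          {c | ‖(Z x.1 - Z x.2) ⬝ᵥ (padicIntEmb Ω ∘ c)‖ ≤ s} := by
      rintro c rfl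
      obtain ⟨a, b, hab, h⟩ := exists_norm_sub_le_normDisc_rpow (Z *ᵥ (padicIntEmb Ω ∘ c))
      refine Set.mem_biUnion (x := (a, b)) (by simpa using hab) ?_
      rwa [Set.mem_ofPred_eq, sub_dotProduct]
    calc _ ≤ ∑ x ∈ (Finset.univ : Finset ι).offDiag, ENNReal.ofReal (C x * s) :=
          (measure_mono hcover).trans <| (measure_biUnion_finset_le _ _).trans <|
            Finset.sum_le_sum fun x hx => hC x (Finset.mem_offDiag.1 hx).2.2 s hs
      _ ≤ ∑ x, ENNReal.ofReal (C x * s) :=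
          Finset.sum_le_sum_of_subset (Finset.subset_univ _)
      _ = ENNReal.ofReal ((∑ x, C x) * s) := by
          rw [Finset.sum_mul, ENNReal.ofReal_sum_of_nonneg fun x _ => mul_nonneg (hC0 x) hs]
  · have hzero (c : κ → ℤ_[p]) : normDisc (Z *ᵥ (padicIntEmb Ω ∘ c)) = 0 := by
      by_contra h
      exact hZ fun a b hab => normDisc_ne_zero_iff.1 h (by simp only [Matrix.mulVec, hab])
    exact ⟨0, le_rfl, fun v hv => by simp [hzero, hv.ne]⟩

end Slab

section MonicOfCoeffs

open Polynomial

variable {R S : Type*} [CommRing R] [CommRing S] {n : ℕ}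

/-- The monic polynomial `X ^ n + ∑ i, f i * X ^ i` with prescribed lower coefficients. -/
noncomputable def monicOfCoeffs (f : Fin n → R) : R[X] :=
  X ^ n + ∑ i, C (f i) * X ^ (i : ℕ)

theorem monicOfCoeffs_monic (f : Fin n → R) : (monicOfCoeffs f).Monic :=
  monic_X_pow_add (degree_sum_fin_lt f)

theorem eval_monicOfCoeffs (f : Fin n → R) (x : R) :
    (monicOfCoeffs f).eval x = x ^ n + ∑ i, f i * x ^ (i : ℕ) := by
  simp [monicOfCoeffs, eval_finsetSum]

theorem natDegree_monicOfCoeffs [Nontrivial R] (f : Fin n → R) :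
    (monicOfCoeffs f).natDegree = n := by
  rw [monicOfCoeffs, natDegree_add_eq_left_of_degree_lt, natDegree_X_pow]
  rw [degree_X_pow]
  exact degree_sum_fin_lt f

theorem map_monicOfCoeffs (φ : R →+* S) (f : Fin n → R) :
    (monicOfCoeffs f).map φ = monicOfCoeffs (φ ∘ f) := by
  simp [monicOfCoeffs, Polynomial.map_sum]

theorem monicOfCoeffs_coeff {P : R[X]} (hP : P.Monic) (hn : P.natDegree = n) :
    monicOfCoeffs (fun i : Fin n => P.coeff i) = P := by
  subst hn
  rw [monicOfCoeffs, ← Finset.sum_range fun i => C (P.coeff i) * X ^ i, ← hP.as_sum]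

end MonicOfCoeffs

section SqRoots

open Polynomial

variable {p : ℕ} [Fact p.Prime] {Ω : Type*} [NormedField Ω] [NormedAlgebra ℚ_[p] Ω] {n : ℕ}

/-- `y` lists square roots of the roots, with multiplicity, of the monic polynomial with lower
coefficients `f`. -/
def IsSqRoots (f : Fin n → ℤ_[p]) (y : Fin n → Ω) : Prop :=
  (monicOfCoeffs f).map (padicIntEmb Ω) = ∏ i, (X - C (y i ^ 2))

theorem IsSqRoots.vandermonde_mulVec_add_pow {f : Fin n → ℤ_[p]} {y : Fin n → Ω}
    (h : IsSqRoots f y) (x : Fin n → Ω) (i : Fin n) :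
    (Matrix.vandermonde x *ᵥ (padicIntEmb Ω ∘ f) + x ^ n) i = ∏ j, (x i - y j ^ 2) := by
  have heval := congrArg (eval (x i)) h
  rw [map_monicOfCoeffs, eval_monicOfCoeffs, eval_prod] at heval
  simpa [Matrix.mulVec, dotProduct, mul_comm, add_comm] using heval

variable [IsUltrametricDist Ω]

theorem norm_prod_sq_sub_sq_le {y y₀ : Fin n → Ω} {η : ℝ} (hy : ∀ i, ‖y i - y₀ i‖ ≤ η)
    (hη : ∀ a b, a ≠ b → η < ‖Sum.elim y₀ (-y₀) a - Sum.elim y₀ (-y₀) b‖) (i : Fin n) :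
    ‖∏ j, (y₀ i ^ 2 - y j ^ 2)‖ ≤
      η * ‖2 * y₀ i‖ * ∏ j ∈ {i}ᶜ, ‖(y₀ ^ 2) i - (y₀ ^ 2) j‖ := by
  have hη0 : 0 ≤ η := (norm_nonneg _).trans (hy i)
  have hadd (j : Fin n) : ‖y₀ i + y j‖ ≤ ‖y₀ i + y₀ j‖ := by
    have hlt : η < ‖y₀ i + y₀ j‖ := by simpa using hη (Sum.inl i) (Sum.inr j) (by simp)
    rw [show y₀ i + y j = (y j - y₀ j) + (y₀ i + y₀ j) by ring]
    exact (IsUltrametricDist.norm_add_le_max _ _).trans (max_le ((hy j).trans hlt.le) le_rfl)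
  have hsub (j : Fin n) (hj : i ≠ j) : ‖y₀ i - y j‖ ≤ ‖y₀ i - y₀ j‖ := by
    have hlt : η < ‖y₀ i - y₀ j‖ := by simpa using hη (Sum.inl i) (Sum.inl j) (by simpa using hj)
    rw [show y₀ i - y j = (y₀ i - y₀ j) - (y j - y₀ j) by ring]
    exact (norm_sub_le_max _ _).trans (max_le le_rfl ((hy j).trans hlt.le))
  rw [norm_prod, ← Finset.prod_mul_prod_compl {i}, Finset.prod_singleton]
  gcongr with j hj
  · rw [sq_sub_sq, norm_mul, mul_comm, two_mul, norm_sub_rev]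
    exact mul_le_mul (hy i) (hadd i) (norm_nonneg _) hη0
  · rw [Pi.pow_apply, Pi.pow_apply, sq_sub_sq, sq_sub_sq, norm_mul, norm_mul]
    exact mul_le_mul (hadd j) (hsub j (by simpa [eq_comm] using hj)) (norm_nonneg _)
      (norm_nonneg _)

theorem volume_isSqRoots_near_le {y₀ : Fin n → Ω} {η : ℝ} (hη0 : 0 ≤ η)
    (hη : ∀ a b, a ≠ b → η < ‖Sum.elim y₀ (-y₀) a - Sum.elim y₀ (-y₀) b‖) :
    volume {f : Fin n → ℤ_[p] | ∃ y : Fin n → Ω, (∀ i, ‖y i - y₀ i‖ ≤ η) ∧ IsSqRoots f y} ≤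
      ENNReal.ofReal (η ^ n * ((∏ i, ‖2 * y₀ i‖) * ‖(Matrix.vandermonde (y₀ ^ 2)).det‖)) := by
  set V := Matrix.vandermonde (y₀ ^ 2)
  set r : Fin n → ℝ := fun i => η * ‖2 * y₀ i‖ * ∏ j ∈ {i}ᶜ, ‖(y₀ ^ 2) i - (y₀ ^ 2) j‖
  have hr (i : Fin n) : 0 ≤ r i := by positivity
  have hdisc : pairDisc y₀ ≠ 0 := by
    refine normDisc_ne_zero_iff.2 fun a b hab => by_contra fun hne => ?_
    simpa [hab, hη0.not_gt] using hη a b hne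
  have hV : V.det ≠ 0 := fun h => hdisc (by simp [pairDisc_eq_det, V, h])
  have hprod : ∏ i, r i = ‖V.det‖ * (η ^ n * ((∏ i, ‖2 * y₀ i‖) * ‖V.det‖)) := by
    simp only [r, Finset.prod_mul_distrib, Finset.prod_const, Finset.card_univ, Fintype.card_fin,
      ← normDisc_eq_prod_prod_compl, ← norm_det_vandermonde_sq]
    ring
  have hsub : {f : Fin n → ℤ_[p] | ∃ y : Fin n → Ω, (∀ i, ‖y i - y₀ i‖ ≤ η) ∧ IsSqRoots f y} ⊆
      {f | ∀ i, ‖(V *ᵥ (padicIntEmb Ω ∘ f) + (y₀ ^ 2) ^ n) i‖ ≤ r i} := by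
    rintro f ⟨y, hy, hf⟩ i
    rw [hf.vandermonde_mulVec_add_pow]
    exact norm_prod_sq_sub_sq_le hy hη i
  have haffine := norm_det_mul_volume_affine_le (p := p) V ((y₀ ^ 2) ^ n) hr
  rw [hprod, ENNReal.ofReal_mul (norm_nonneg _), ofReal_norm,
    ENNReal.mul_le_mul_iff_right (by simpa using hV) enorm_ne_top] at haffine
  exact (measure_mono hsub).trans haffine

end SqRoots

section ParametrizedRoots

theorem measure_biUnion_le_mul_measure_of_closedBall {X Z : Type*} [PseudoMetricSpace X]
    [IsUltrametricDist X] [SecondCountableTopology X] [MeasurableSpace X] [OpensMeasurableSpace X]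
    [MeasurableSpace Z] {μ : Measure X} {ν : Measure Z} {S : X → Set Z} {K : Set X} {ε : ℝ}
    (hε : 0 < ε) {C : ℝ≥0∞} (hK : ∀ c ∈ K, Metric.closedBall c ε ⊆ K)
    (hS : ∀ c ∈ K, ν (⋃ c' ∈ Metric.closedBall c ε, S c') ≤ C * μ (Metric.closedBall c ε)) :
    ν (⋃ c ∈ K, S c) ≤ C * μ K := by
  set 𝓑 : Set (Set X) := (Metric.closedBall · ε) '' K
  have hopen : ∀ b ∈ 𝓑, IsOpen b := by
    rintro _ ⟨c, -, rfl⟩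
    exact IsUltrametricDist.isOpen_closedBall c hε.ne'
  have hdisj : 𝓑.PairwiseDisjoint id := by
    rintro _ ⟨c, -, rfl⟩ _ ⟨c', -, rfl⟩ hne
    exact (IsUltrametricDist.closedBall_eq_or_disjoint c c' ε).resolve_left hne
  have hcount : 𝓑.Countable := hdisj.countable_of_isOpen hopen <| by
    rintro _ ⟨c, -, rfl⟩
    exact ⟨c, Metric.mem_closedBall_self hε.le⟩
  have hunion : ⋃ b ∈ 𝓑, b = K := by
    refine Set.Subset.antisymm (Set.iUnion₂_subset ?_) fun c hc =>
      Set.mem_biUnion (Set.mem_image_of_mem _ hc) (Metric.mem_closedBall_self hε.le)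
    rintro _ ⟨c, hc, rfl⟩
    exact hK c hc
  have := hcount.to_subtype
  calc ν (⋃ c ∈ K, S c) = ν (⋃ b : 𝓑, ⋃ c ∈ (b : Set X), S c) := by
        rw [← hunion]
        simp only [Set.biUnion_iUnion, Set.iUnion_coe_set]
    _ ≤ ∑' b : 𝓑, ν (⋃ c ∈ (b : Set X), S c) := measure_iUnion_le _
    _ ≤ ∑' b : 𝓑, C * μ b := ENNReal.tsum_le_tsum <| by
        rintro ⟨_, c, hc, rfl⟩
        exact hS c hc
    _ = C * μ K := by
        rw [ENNReal.tsum_mul_left]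
        exact congrArg (C * ·) <| (measure_biUnion hcount hdisj fun b hb =>
          (hopen b hb).measurableSet).symm.trans (congrArg μ hunion)

theorem norm_sumElim_neg_sub {Ω ι : Type*} [SeminormedAddCommGroup Ω] (y y' : ι → Ω) {η : ℝ}
    (h : ∀ i, ‖y i - y' i‖ ≤ η) (a : ι ⊕ ι) :
    ‖Sum.elim y (-y) a - Sum.elim y' (-y') a‖ ≤ η := by
  rcases a with i | i
  · exact h i
  · simpa [neg_add_eq_sub, norm_sub_rev] using h i

theorem exists_mul_inv_pow_lt {q : ℝ} (hq : 1 < q) (b : ℝ) {δ : ℝ} (hδ : 0 < δ) :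
    ∃ k : ℕ, b * (q ^ k)⁻¹ < δ := by
  obtain ⟨k, hk⟩ := pow_unbounded_of_one_lt (b / δ) hq
  refine ⟨k, ?_⟩
  rw [← div_eq_mul_inv, div_lt_iff₀ (by positivity)]
  exact (div_lt_iff₀' hδ).1 hk

variable {p : ℕ} [Fact p.Prime] {Ω : Type*} [NormedField Ω] [NormedAlgebra ℚ_[p] Ω]
  [IsUltrametricDist Ω]

theorem padicInt_volume_closedBall_pi {ι : Type*} [Fintype ι] (c : ι → ℤ_[p]) (k : ℕ) :
    volume (Metric.closedBall c ((p : ℝ) ^ k)⁻¹) =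
      ENNReal.ofReal (((p : ℝ) ^ k)⁻¹ ^ Fintype.card ι) := by
  have hp : (0 : ℝ) < (p : ℝ) ^ k := pow_pos (Nat.cast_pos.2 (Fact.out : p.Prime).pos) k
  have hball (x : ℤ_[p]) : volume (Metric.closedBall x ((p : ℝ) ^ k)⁻¹) =
      ENNReal.ofReal ((p : ℝ) ^ k)⁻¹ := by
    have hset : Metric.closedBall x ((p : ℝ) ^ k)⁻¹ =
        (· + -x) ⁻¹' (Ideal.span {(p : ℤ_[p]) ^ k} : Set ℤ_[p]) := by
      ext y
      rw [mem_closedBall_iff_norm, ← zpow_natCast, ← zpow_neg,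
        PadicInt.norm_le_pow_iff_mem_span_pow, sub_eq_add_neg]
      rfl
    rw [hset, measure_preimage_add_right, padicInt_volume_span_pow, ENNReal.ofReal_inv_of_pos hp,
      ENNReal.ofReal_pow (Nat.cast_nonneg p), ENNReal.ofReal_natCast]
  rw [volume_pi_closedBall _ (inv_nonneg.2 hp.le)]
  simp only [hball, Finset.prod_const, Finset.card_univ, ENNReal.ofReal_pow (inv_nonneg.2 hp.le)]

theorem norm_mulVec_le {ι κ : Type*} [Fintype κ] {Y : Matrix ι κ Ω} {B s : ℝ} (hB : 0 ≤ B)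
    (hY : ∀ i j, ‖Y i j‖ ≤ B) {c : κ → Ω} (hs : 0 ≤ s) (hc : ∀ j, ‖c j‖ ≤ s) (i : ι) :
    ‖(Y *ᵥ c) i‖ ≤ B * s := by
  refine IsUltrametricDist.norm_sum_le_of_forall_le_of_nonneg (by positivity) fun j _ => ?_
  rw [norm_mul]
  exact mul_le_mul (hY i j) (hc j) (norm_nonneg _) hB

theorem norm_two_mul_le (x : Ω) : ‖2 * x‖ ≤ ‖x‖ := by
  rw [two_mul]
  exact (IsUltrametricDist.norm_add_le_max x x).trans_eq (max_self _)

variable {n : ℕ}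

theorem pairDisc_eq_of_near {y y₀ : Fin n → Ω} {η : ℝ} (hy : ∀ i, ‖y i - y₀ i‖ ≤ η)
    (hη : ∀ a b, a ≠ b → η < ‖Sum.elim y₀ (-y₀) a - Sum.elim y₀ (-y₀) b‖) :
    pairDisc y = pairDisc y₀ := by
  unfold pairDisc normDisc
  exact Finset.prod_congr rfl fun x hx =>
    norm_sub_eq_of_norm_sub_lt (norm_sumElim_neg_sub y y₀ hy)
      (hη _ _ (Finset.mem_offDiag.1 hx).2.2)

theorem volume_isSqRoots_near_le_pairDisc {y₀ : Fin n → Ω} {η B : ℝ} (hη0 : 0 ≤ η) (hB : 1 ≤ B)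
    (hy₀ : ∀ i, ‖y₀ i‖ ≤ B)
    (hη : ∀ a b, a ≠ b → η < ‖Sum.elim y₀ (-y₀) a - Sum.elim y₀ (-y₀) b‖) :
    volume {f : Fin n → ℤ_[p] | ∃ y : Fin n → Ω, (∀ i, ‖y i - y₀ i‖ ≤ η) ∧ IsSqRoots f y} ≤
      ENNReal.ofReal (η ^ n * (B ^ n * pairDisc y₀ ^ (1 / 4 : ℝ))) := by
  refine (volume_isSqRoots_near_le hη0 hη).trans (ENNReal.ofReal_le_ofReal ?_)
  have hprod : ∏ i, ‖2 * y₀ i‖ ≤ B ^ n := by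
    simpa using Finset.prod_le_prod (s := Finset.univ) (fun i _ => norm_nonneg (2 * y₀ i))
      fun i _ => (norm_two_mul_le _).trans (hy₀ i)
  have hrpow : (∏ i, ‖2 * y₀ i‖) ^ (1 / 2 : ℝ) ≤ B ^ n :=
    (Real.rpow_le_rpow (Finset.prod_nonneg fun _ _ => norm_nonneg _) hprod (by norm_num)).trans
      (Real.rpow_le_self_of_one_le (one_le_pow₀ hB) (by norm_num))
  have hdisc := normDisc_nonneg (Sum.elim y₀ (-y₀))
  rw [prod_norm_two_mul_mul_norm_det_vandermonde]
  gcongr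

theorem div_pow_le_norm_sub_of_pairDisc {y : Fin n → Ω} {B : ℝ} (hB : 0 < B)
    (hy : ∀ i, ‖y i‖ ≤ B) {a b : Fin n ⊕ Fin n} (hab : a ≠ b) :
    pairDisc y / B ^ ((Finset.univ : Finset (Fin n ⊕ Fin n)).offDiag.card - 1) ≤
      ‖Sum.elim y (-y) a - Sum.elim y (-y) b‖ :=
  (div_le_iff₀ (by positivity)).2 <|
    normDisc_le_norm_sub_mul_pow (by rintro (i | i) <;> simpa using hy i) hab

theorem norm_mulVec_padicIntEmb_sub_le {Y : Matrix (Fin n) (Fin n) Ω} {B ε : ℝ} (hB : 0 ≤ B)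
    (hY : ∀ i j, ‖Y i j‖ ≤ B) (hε : 0 ≤ ε) {c c' : Fin n → ℤ_[p]}
    (h : c' ∈ Metric.closedBall c ε) (i : Fin n) :
    ‖(Y *ᵥ (padicIntEmb Ω ∘ c')) i - (Y *ᵥ (padicIntEmb Ω ∘ c)) i‖ ≤ B * ε := by
  rw [← Pi.sub_apply, ← Matrix.mulVec_sub]
  refine norm_mulVec_le hB hY hε (fun j => ?_) i
  rw [Pi.sub_apply, Function.comp_apply, Function.comp_apply, ← map_sub, norm_padicIntEmb]
  exact (norm_le_pi_norm (c' - c) j).trans (mem_closedBall_iff_norm.1 h)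

theorem volume_isSqRoots_mulVec_le {Y : Matrix (Fin n) (Fin n) Ω} {B : ℝ} (hB : 1 ≤ B)
    (hY : ∀ i j, ‖Y i j‖ ≤ B) {v : ℝ} (hv : 0 < v) :
    volume {f : Fin n → ℤ_[p] | ∃ c : Fin n → ℤ_[p], pairDisc (Y *ᵥ (padicIntEmb Ω ∘ c)) = v ∧
        IsSqRoots f (Y *ᵥ (padicIntEmb Ω ∘ c))} ≤
      ENNReal.ofReal (B ^ n * B ^ n * v ^ (1 / 4 : ℝ)) *
        volume {c : Fin n → ℤ_[p] | pairDisc (Y *ᵥ (padicIntEmb Ω ∘ c)) = v} := by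
  set y : (Fin n → ℤ_[p]) → Fin n → Ω := fun c => Y *ᵥ (padicIntEmb Ω ∘ c)
  have hB0 : 0 < B := one_pos.trans_le hB
  have hyB (c) (i) : ‖y c i‖ ≤ B :=
    (norm_mulVec_le hB0.le hY zero_le_one (fun j => (norm_padicIntEmb Ω _).trans_le
      (PadicInt.norm_le_one (c j))) i).trans_eq (mul_one B)
  obtain ⟨k, hk⟩ := exists_mul_inv_pow_lt (Nat.one_lt_cast.2 (Fact.out : p.Prime).one_lt) B <|
    div_pos hv (pow_pos hB0 ((Finset.univ : Finset (Fin n ⊕ Fin n)).offDiag.card - 1))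
  set ε := ((p : ℝ) ^ k)⁻¹
  have hε : 0 < ε := inv_pos.2 (pow_pos (Nat.cast_pos.2 (Fact.out : p.Prime).pos) k)
  have hsep (c) (hc : pairDisc (y c) = v) (a b) (hab : a ≠ b) :
      B * ε < ‖Sum.elim (y c) (-y c) a - Sum.elim (y c) (-y c) b‖ :=
    (hc ▸ hk).trans_le (div_pow_le_norm_sub_of_pairDisc hB0 (hyB c) hab)
  have hnear (c c') (h : c' ∈ Metric.closedBall c ε) (i) : ‖y c' i - y c i‖ ≤ B * ε :=
    norm_mulVec_padicIntEmb_sub_le hB0.le hY hε.le h i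
  have hlevel (c) (hc : pairDisc (y c) = v) : Metric.closedBall c ε ⊆ {c | pairDisc (y c) = v} :=
    fun c' hc' => (pairDisc_eq_of_near (hnear c c' hc') (hsep c hc)).trans hc
  suffices h : volume (⋃ c ∈ {c | pairDisc (y c) = v}, {f : Fin n → ℤ_[p] | IsSqRoots f (y c)}) ≤
      ENNReal.ofReal (B ^ n * B ^ n * v ^ (1 / 4 : ℝ)) * volume {c | pairDisc (y c) = v} by
    refine (measure_mono ?_).trans h
    rintro f ⟨c, hc, hf⟩
    exact Set.mem_biUnion hc hf
  refine measure_biUnion_le_mul_measure_of_closedBall hε hlevel fun c hc => ?_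
  calc _ ≤ volume {f : Fin n → ℤ_[p] | ∃ y' : Fin n → Ω, (∀ i, ‖y' i - y c i‖ ≤ B * ε) ∧
          IsSqRoots f y'} := measure_mono <| Set.iUnion₂_subset fun c' hc' f hf =>
            ⟨y c', hnear c c' hc', hf⟩
    _ ≤ ENNReal.ofReal ((B * ε) ^ n * (B ^ n * pairDisc (y c) ^ (1 / 4 : ℝ))) :=
        volume_isSqRoots_near_le_pairDisc (by positivity) hB (hyB c) (hsep c hc)
    _ = _ := by
        rw [padicInt_volume_closedBall_pi, ← ENNReal.ofReal_mul (by positivity), hc,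
          Fintype.card_fin, mul_pow]
        congr 1
        ring

theorem exists_volume_isSqRoots_mulVec_le [NeZero n] : ∃ δ : ℝ, 0 < δ ∧
    ∀ Y : Matrix (Fin n) (Fin n) Ω, ∃ C : ℝ, 0 ≤ C ∧ ∀ v, 0 < v →
      volume {f : Fin n → ℤ_[p] | ∃ c : Fin n → ℤ_[p],
          pairDisc (Y *ᵥ (padicIntEmb Ω ∘ c)) = v ∧
            IsSqRoots f (Y *ᵥ (padicIntEmb Ω ∘ c))} ≤
        ENNReal.ofReal (C * v ^ (1 / 4 + δ)) := by
  have : Nontrivial (Fin n ⊕ Fin n) := ⟨Sum.inl 0, Sum.inr 0, by simp⟩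
  have hN : 0 < (Finset.univ : Finset (Fin n ⊕ Fin n)).offDiag.card :=
    Finset.card_pos.2 ⟨(Sum.inl 0, Sum.inr 0), by simp⟩
  refine ⟨((Finset.univ : Finset (Fin n ⊕ Fin n)).offDiag.card : ℝ)⁻¹, by positivity, fun Y => ?_⟩
  obtain ⟨C, hC, hslab⟩ := exists_volume_normDisc_mulVec_eq_le (p := p) (Matrix.fromRows Y (-Y))
  simp only [Matrix.fromRows_mulVec, Matrix.neg_mulVec] at hslab
  obtain ⟨B, hB⟩ := (Set.finite_range fun x : Fin n × Fin n => ‖Y x.1 x.2‖).bddAbove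
  have hY (i j) : ‖Y i j‖ ≤ max 1 B := le_max_of_le_right (hB ⟨(i, j), rfl⟩)
  refine ⟨max 1 B ^ n * max 1 B ^ n * C, by positivity, fun v hv => ?_⟩
  refine (volume_isSqRoots_mulVec_le (le_max_left 1 B) hY hv).trans ?_
  refine (mul_le_mul_right (hslab v hv) _).trans_eq ?_
  rw [← ENNReal.ofReal_mul (by positivity), Real.rpow_add hv]
  congr 1
  ring

end ParametrizedRoots

section UltrametricRoots

open Polynomial

variable {Ω : Type*} [NormedField Ω]

theorem exists_monicOfCoeffs_eq_prod [IsAlgClosed Ω] {n : ℕ} (g : Fin n → Ω) :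
    ∃ θ : Fin n → Ω, monicOfCoeffs g = ∏ i, (X - C (θ i)) := by
  have hsplit := IsAlgClosed.splits (monicOfCoeffs g)
  obtain ⟨l, hl⟩ := Quot.exists_rep (monicOfCoeffs g).roots
  have hlen : l.length = n := by
    rw [← natDegree_monicOfCoeffs g, hsplit.natDegree_eq_card_roots, ← hl]
    rfl
  subst hlen
  refine ⟨l.get, ?_⟩
  rw [hsplit.eq_prod_roots_of_monic (monicOfCoeffs_monic g), ← hl]
  simpa using (Fin.prod_univ_fun_getElem l (X - C ·)).symm

theorem exists_norm_sub_lt_of_norm_prod_lt {ι : Type*} {T : Finset ι} {θ : ι → Ω} {x : Ω} {δ : ℝ}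
    (hδ : 0 ≤ δ) (h : ‖∏ i ∈ T, (x - θ i)‖ < δ ^ T.card) : ∃ i ∈ T, ‖x - θ i‖ < δ := by
  by_contra! hcon
  rw [norm_prod, ← Finset.prod_const] at h
  exact h.not_ge (Finset.prod_le_prod (fun _ _ => hδ) hcon)

theorem exists_ne_of_sum_eq_zero [CharZero Ω] {n : ℕ} {g θ : Fin (n + 1) → Ω}
    (h : monicOfCoeffs g = ∏ i, (X - C (θ i))) (hlast : g (Fin.last n) = 0) (hg : g ≠ 0)
    (i : Fin (n + 1)) : ∃ j, θ j ≠ θ i := by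
  by_contra! hcon
  have hcoeff (k : Fin (n + 1)) : (∏ i, (X - C (θ i))).coeff k = g k := by
    rw [← h, monicOfCoeffs, coeff_add, coeff_X_pow, if_neg k.2.ne, zero_add, finsetSum_coeff]
    simp [coeff_X_pow, Fin.val_inj]
  have htrace := prod_X_sub_C_coeff_card_pred Finset.univ θ (by simp)
  have hcoeff_last : (∏ i, (X - C (θ i))).coeff n = 0 := (hcoeff (Fin.last n)).trans hlast
  rw [Finset.card_univ, Fintype.card_fin, Nat.add_sub_cancel, hcoeff_last, zero_eq_neg,
    Finset.sum_congr rfl fun j _ => hcon j, Finset.sum_const, Finset.card_univ, Fintype.card_fin,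
    nsmul_eq_mul, mul_eq_zero] at htrace
  have hθ : θ i = 0 := htrace.resolve_left (Nat.cast_ne_zero.2 n.succ_ne_zero)
  refine hg (funext fun k => ?_)
  rw [← hcoeff k]
  simp [hcon, hθ, coeff_X_pow, k.2.ne]

theorem monicOfCoeffs_coeff_prod_X_sub_C {n : ℕ} {S : Finset Ω} (hS : S.card = n) :
    monicOfCoeffs (fun i : Fin n => (∏ s ∈ S, (X - C s)).coeff i) = ∏ s ∈ S, (X - C s) :=
  monicOfCoeffs_coeff (monic_prod_X_sub_C id S)
    ((natDegree_finsetProd_X_sub_C_eq_card S fun s => s).trans hS)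

variable [IsUltrametricDist Ω]

theorem exists_norm_pow_le_of_monicOfCoeffs_eval_eq_zero {n : ℕ} {f : Fin n → Ω} {x : Ω}
    (hx : (monicOfCoeffs f).eval x = 0) : ∃ i, ‖x‖ ^ n ≤ ‖f i‖ * ‖x‖ ^ (i : ℕ) := by
  rw [eval_monicOfCoeffs] at hx
  have : NeZero n := ⟨by rintro rfl; simp at hx⟩
  obtain ⟨i, -, hi⟩ := IsUltrametricDist.exists_norm_finsetSum_le_of_nonempty
    Finset.univ_nonempty fun i : Fin n => f i * x ^ (i : ℕ)
  refine ⟨i, ?_⟩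
  rwa [← norm_pow, ← norm_pow, ← norm_mul, eq_neg_of_add_eq_zero_left hx, norm_neg]

theorem norm_le_one_of_monicOfCoeffs_eval_eq_zero {n : ℕ} {f : Fin n → Ω}
    (hf : ∀ i, ‖f i‖ ≤ 1) {x : Ω} (hx : (monicOfCoeffs f).eval x = 0) : ‖x‖ ≤ 1 := by
  obtain ⟨i, hi⟩ := exists_norm_pow_le_of_monicOfCoeffs_eval_eq_zero hx
  by_contra! hlt
  exact (pow_lt_pow_right₀ hlt i.2).not_ge
    (hi.trans (mul_le_of_le_one_left (by positivity) (hf i)))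

theorem norm_coeff_prod_X_sub_C_le_one (S : Finset Ω) (hS : ∀ s ∈ S, ‖s‖ ≤ 1) (k : ℕ) :
    ‖(∏ s ∈ S, (X - C s)).coeff k‖ ≤ 1 := by
  classical
  induction S using Finset.induction_on generalizing k with
  | empty =>
    rw [Finset.prod_empty, coeff_one]
    split_ifs <;> simp
  | insert a S ha ih =>
    have ih' := ih fun s hs => hS s (Finset.mem_insert_of_mem hs)
    have hmul : ‖a * (∏ s ∈ S, (X - C s)).coeff k‖ ≤ 1 := by
      rw [norm_mul]
      exact mul_le_one₀ (hS a (Finset.mem_insert_self a S)) (norm_nonneg _) (ih' k)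
    rw [Finset.prod_insert ha, sub_mul, coeff_sub, coeff_C_mul]
    refine (norm_sub_le_max _ _).trans (max_le ?_ hmul)
    cases k with
    | zero => simp
    | succ k => rw [coeff_X_mul]; exact ih' k

theorem norm_eval_monicOfCoeffs_sub_le {n : ℕ} {f g : Fin n → Ω} {x : Ω} (hx : ‖x‖ ≤ 1) :
    ‖(monicOfCoeffs f).eval x - (monicOfCoeffs g).eval x‖ ≤ ‖f - g‖ := by
  simp_rw [eval_monicOfCoeffs, add_sub_add_left_eq_sub, ← Finset.sum_sub_distrib, ← sub_mul]
  refine IsUltrametricDist.norm_sum_le_of_forall_le_of_nonneg (norm_nonneg _) fun i _ => ?_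
  rw [norm_mul, norm_pow]
  exact (mul_le_of_le_one_right (norm_nonneg _) (pow_le_one₀ (norm_nonneg _) hx)).trans
    (norm_le_pi_norm (f - g) i)

/-- A root `s` of a polynomial close to `∏ i, (X - θ i)` is near some `θ i`; as another root is near
some `θ j ≠ θ i`, the roots near `θ i` form a proper subset. -/
theorem exists_filter_norm_sub_lt_ssubset {ι : Type*} [Fintype ι] {θ : ι → Ω} {δ : ℝ}
    (hδ : 0 ≤ δ) (hsep : ∀ i j, θ i ≠ θ j → δ ≤ ‖θ i - θ j‖) (hne : ∀ i, ∃ j, θ j ≠ θ i)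
    (hθ : ∀ i, ‖θ i‖ ≤ 1) {S : Finset Ω} (hS : ∀ s ∈ S, ‖s‖ ≤ 1) (hcard : S.card = Fintype.card ι)
    (hclose : ∀ x, ‖x‖ ≤ 1 → ‖∏ s ∈ S, (x - s) - ∏ i, (x - θ i)‖ < δ ^ S.card) {s : Ω}
    (hs : s ∈ S) : ∃ i, ‖s - θ i‖ < δ ∧ S.filter (fun x => ‖x - θ i‖ < δ) ⊂ S := by
  have hs' := hclose s (hS s hs)
  rw [Finset.prod_eq_zero hs (sub_self s), zero_sub, norm_neg, hcard] at hs'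
  obtain ⟨i, -, hi⟩ := exists_norm_sub_lt_of_norm_prod_lt hδ hs'
  obtain ⟨j, hj⟩ := hne i
  have hj' := hclose (θ j) (hθ j)
  rw [Finset.prod_eq_zero (Finset.mem_univ j) (sub_self (θ j)), sub_zero] at hj'
  obtain ⟨s', hs', hsj⟩ := exists_norm_sub_lt_of_norm_prod_lt hδ hj'
  refine ⟨i, hi, Finset.filter_ssubset.2 ⟨s', hs', fun hsi => (hsep j i hj).not_gt ?_⟩⟩
  rw [← sub_add_sub_cancel (θ j) s' (θ i)]
  exact (IsUltrametricDist.norm_add_le_max _ _).trans_lt (max_lt hsj hsi)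

end UltrametricRoots

section StableSets

open Polynomial

variable {F Ω : Type*} [Field F] [Field Ω] [Algebra F Ω]

/-- The finite set `S` is stable under the automorphisms of `Ω` fixing `K` pointwise. -/
def IsGalStable (K : IntermediateField F Ω) (S : Finset Ω) : Prop :=
  ∀ σ : Gal(Ω/F), (∀ x ∈ K, σ x = x) → ∀ s ∈ S, σ s ∈ S

variable (F) in
/-- All members of the family `𝓢` of finite sets lie in one finite extension of `F`. -/
def ContainedInFiniteExtension (𝓢 : Set (Finset Ω)) : Prop :=
  ∃ M : IntermediateField F Ω, FiniteDimensional F M ∧ ∀ S ∈ 𝓢, ∀ s ∈ S, s ∈ M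

theorem ContainedInFiniteExtension.mono {𝓢 𝓣 : Set (Finset Ω)} (h𝓢𝓣 : 𝓢 ⊆ 𝓣)
    (h : ContainedInFiniteExtension F 𝓣) : ContainedInFiniteExtension F 𝓢 :=
  let ⟨M, hM, hMS⟩ := h
  ⟨M, hM, fun S hS => hMS S (h𝓢𝓣 hS)⟩

theorem ContainedInFiniteExtension.union {𝓢 𝓣 : Set (Finset Ω)}
    (h𝓢 : ContainedInFiniteExtension F 𝓢) (h𝓣 : ContainedInFiniteExtension F 𝓣) :
    ContainedInFiniteExtension F (𝓢 ∪ 𝓣) := by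
  obtain ⟨M, hM, hMS⟩ := h𝓢
  obtain ⟨L, hL, hLS⟩ := h𝓣
  refine ⟨M ⊔ L, IntermediateField.finiteDimensional_sup M L, ?_⟩
  rintro S (hS | hS) s hs
  · exact (le_sup_left : M ≤ M ⊔ L) (hMS S hS s hs)
  · exact (le_sup_right : L ≤ M ⊔ L) (hLS S hS s hs)

variable {K : IntermediateField F Ω} {S : Finset Ω}

theorem IsGalStable.mono {L : IntermediateField F Ω} (h : IsGalStable K S) (hKL : K ≤ L) :
    IsGalStable L S :=
  fun σ hσ => h σ fun x hx => hσ x (hKL hx)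

theorem IsGalStable.image_eq [DecidableEq Ω] (h : IsGalStable K S) {σ : Gal(Ω/F)}
    (hσ : ∀ x ∈ K, σ x = x) : S.image σ = S :=
  Finset.eq_of_subset_of_card_le (Finset.image_subset_iff.2 (h σ hσ))
    (Finset.card_image_of_injective S σ.injective).ge

theorem IsGalStable.image_affine [DecidableEq Ω] (h : IsGalStable K S) {t : Ω} (ht : t ∈ K)
    (d : F) : IsGalStable K (S.image fun s => d • (s - t)) := by
  intro σ hσ s hs
  obtain ⟨a, ha, rfl⟩ := Finset.mem_image.1 hs
  exact Finset.mem_image.2 ⟨σ a, h σ hσ a ha, by simp [hσ t ht]⟩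

variable [IsGalois F Ω]

theorem intermediateField_mem_of_forall_fixed {x : Ω}
    (h : ∀ σ : Gal(Ω/F), (∀ y ∈ K, σ y = y) → σ x = x) : x ∈ K := by
  rw [← InfiniteGalois.fixedField_fixingSubgroup K, IntermediateField.mem_fixedField_iff]
  exact fun σ hσ => h σ ((IntermediateField.mem_fixingSubgroup_iff K σ).1 hσ)

theorem IsGalStable.coeff_mem (h : IsGalStable K S) (k : ℕ) :
    (∏ s ∈ S, (X - C s)).coeff k ∈ K := by
  classical
  refine intermediateField_mem_of_forall_fixed fun σ hσ => ?_
  have hmap : (∏ s ∈ S, (X - C s)).map (σ : Ω →+* Ω) = ∏ s ∈ S, (X - C s) := by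
    rw [Polynomial.map_prod]
    conv_rhs => rw [← h.image_eq hσ, Finset.prod_image σ.injective.injOn]
    simp
  conv_rhs => rw [← hmap, coeff_map]
  rfl

theorem IsGalStable.sum_mem (h : IsGalStable K S) : ∑ s ∈ S, s ∈ K := by
  classical
  refine intermediateField_mem_of_forall_fixed fun σ hσ => ?_
  rw [map_sum]
  conv_rhs => rw [← h.image_eq hσ, Finset.sum_image σ.injective.injOn]

end StableSets

section Krasner

open Polynomial

variable {F Ω : Type*} [NontriviallyNormedField F] [NormedField Ω] [NormedAlgebra F Ω]
  {K : IntermediateField F Ω} {S : Finset Ω}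

theorem IsGalStable.filter_norm_sub_lt (hiso : ∀ (σ : Gal(Ω/F)) (x : Ω), ‖σ x‖ = ‖x‖)
    (h : IsGalStable K S) {θ : Ω} (hθ : θ ∈ K) (δ : ℝ) :
    IsGalStable K (S.filter fun s => ‖s - θ‖ < δ) := by
  intro σ hσ s hs
  rw [Finset.mem_filter] at hs ⊢
  refine ⟨h σ hσ s hs.1, ?_⟩
  rw [← hσ θ hθ, ← map_sub, hiso]
  exact hs.2

/-- The `K`-stable sets of `n` elements of norm at most `1` whose monic polynomial has its lower
coefficients in `T`. -/
def integralStableSets (K : IntermediateField F Ω) (n : ℕ) (T : Set (Fin n → Ω)) :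
    Set (Finset Ω) :=
  {S | S.card = n ∧ IsGalStable K S ∧ (∀ s ∈ S, ‖s‖ ≤ 1) ∧
    (fun i : Fin n => (∏ s ∈ S, (X - C s)).coeff i) ∈ T}

theorem IsGalStable.exists_normalized [CharZero Ω] [IsGalois F Ω] {c : F} (hc : 1 < ‖c‖)
    (h : IsGalStable K S) (hS : ¬ ∀ s ∈ S, s ∈ K) :
    ∃ t ∈ K, ∃ d : F, d ≠ 0 ∧ ∑ s ∈ S, d • (s - t) = 0 ∧ (∀ s ∈ S, ‖d • (s - t)‖ ≤ 1) ∧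
      ∃ s ∈ S, ‖c‖⁻¹ ≤ ‖d • (s - t)‖ := by
  push Not at hS
  obtain ⟨s₀, hs₀, hs₀K⟩ := hS
  have hcard : (S.card : Ω) ≠ 0 := Nat.cast_ne_zero.2 (Finset.card_ne_zero_of_mem hs₀)
  set t : Ω := (∑ s ∈ S, s) / S.card
  have ht : t ∈ K := div_mem h.sum_mem (natCast_mem K _)
  obtain ⟨s₁, hs₁, hmax⟩ := S.exists_max_image (fun s => ‖s - t‖) ⟨s₀, hs₀⟩
  have hne : s₁ - t ≠ 0 := by
    refine norm_pos_iff.1 ((norm_pos_iff.2 (sub_ne_zero.2 ?_)).trans_le (hmax s₀ hs₀))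
    rintro rfl
    exact hs₀K ht
  obtain ⟨d, hd, hlt, hle, -⟩ := rescale_to_shell hc one_pos hne
  refine ⟨t, ht, d, hd, ?_, fun s hs => ?_, s₁, hs₁, one_div ‖c‖ ▸ hle⟩
  · rw [← Finset.smul_sum, Finset.sum_sub_distrib, Finset.sum_const, nsmul_eq_mul,
      mul_div_cancel₀ _ hcard, sub_self, smul_zero]
  · rw [norm_smul] at hlt ⊢
    exact (mul_le_mul_of_nonneg_left (hmax s hs) (norm_nonneg d)).trans hlt.le

theorem isCompact_traceless_intermediateField [LocallyCompactSpace F] [FiniteDimensional F K]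
    (n : ℕ) (r : ℝ) : IsCompact {g : Fin (n + 1) → Ω |
      (∀ i, g i ∈ K ∧ ‖g i‖ ≤ 1) ∧ g (Fin.last n) = 0 ∧ r ≤ ‖g‖} := by
  have : ProperSpace K := FiniteDimensional.proper F K
  have hball : {x : Ω | x ∈ K ∧ ‖x‖ ≤ 1} = Subtype.val '' Metric.closedBall (0 : K) 1 := by
    ext x
    simp [and_comm]
  have hcompact : IsCompact {x : Ω | x ∈ K ∧ ‖x‖ ≤ 1} :=
    hball ▸ (isCompact_closedBall _ _).image continuous_subtype_val
  exact (isCompact_pi_infinite fun _ => hcompact).inter_right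
    ((isClosed_eq (continuous_apply _) continuous_const).inter
      (isClosed_le continuous_const continuous_norm))

variable [IsUltrametricDist Ω] [IsAlgClosure F Ω] [CharZero F]

theorem exists_nhds_containedInFiniteExtension (hiso : ∀ (σ : Gal(Ω/F)) (x : Ω), ‖σ x‖ = ‖x‖)
    {n : ℕ} (ih : ∀ K : IntermediateField F Ω, FiniteDimensional F K →
      ContainedInFiniteExtension F {S | S.card ≤ n ∧ IsGalStable K S})
    [FiniteDimensional F K] {g : Fin (n + 1) → Ω} (hg : ∀ i, ‖g i‖ ≤ 1)
    (hlast : g (Fin.last n) = 0) (hg0 : g ≠ 0) :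
    ∃ t ∈ nhds g, ContainedInFiniteExtension F (integralStableSets K (n + 1) t) := by
  have := IsAlgClosure.isAlgClosed F (K := Ω)
  have := charZero_of_injective_algebraMap (algebraMap F Ω).injective
  obtain ⟨θ, hθ⟩ := exists_monicOfCoeffs_eq_prod g
  have heval (x : Ω) : (monicOfCoeffs g).eval x = ∏ i, (x - θ i) := by simp [hθ, eval_prod]
  have hθ1 (i) : ‖θ i‖ ≤ 1 := norm_le_one_of_monicOfCoeffs_eval_eq_zero hg <| by
    rw [heval, Finset.prod_eq_zero (Finset.mem_univ i) (sub_self _)]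
  have hne := exists_ne_of_sum_eq_zero hθ hlast hg0
  set δ := (Set.range θ).infsep
  have hδ : 0 < δ := by
    obtain ⟨j, hj⟩ := hne 0
    exact (Set.finite_range θ).infsep_pos_iff_nontrivial.2 ⟨θ j, ⟨j, rfl⟩, θ 0, ⟨0, rfl⟩, hj⟩
  have hsep (i j) (hij : θ i ≠ θ j) : δ ≤ ‖θ i - θ j‖ := by
    rw [← dist_eq_norm]
    exact Set.infsep_le_dist_of_mem ⟨i, rfl⟩ ⟨j, rfl⟩ hij
  set L : IntermediateField F Ω := IntermediateField.adjoin F (Set.range θ)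
  have : FiniteDimensional F L := IntermediateField.finiteDimensional_adjoin
    fun x _ => Algebra.IsIntegral.isIntegral x
  obtain ⟨M, hM, hMS⟩ := ih (K ⊔ L) (IntermediateField.finiteDimensional_sup K L)
  refine ⟨Metric.ball g (δ ^ (n + 1)), Metric.ball_mem_nhds g (by positivity), M, hM, ?_⟩
  rintro S ⟨hcard, hS, hS1, hball⟩ s hs
  rw [mem_ball_iff_norm] at hball
  have hclose (x : Ω) (hx : ‖x‖ ≤ 1) :
      ‖∏ s ∈ S, (x - s) - ∏ i, (x - θ i)‖ < δ ^ S.card := by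
    rw [hcard, ← heval, show ∏ s ∈ S, (x - s) = (∏ s ∈ S, (X - C s)).eval x by simp [eval_prod],
      ← monicOfCoeffs_coeff_prod_X_sub_C hcard]
    exact (norm_eval_monicOfCoeffs_sub_le hx).trans_lt hball
  obtain ⟨i, hi, hsub⟩ := exists_filter_norm_sub_lt_ssubset hδ.le hsep hne hθ1 hS1
    (by simpa using hcard) hclose hs
  have hθi : θ i ∈ K ⊔ L :=
    (le_sup_right : L ≤ K ⊔ L) (IntermediateField.subset_adjoin _ _ ⟨i, rfl⟩)
  exact hMS _ ⟨Nat.le_of_lt_succ ((Finset.card_lt_card hsub).trans_eq hcard),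
    (hS.mono le_sup_left).filter_norm_sub_lt hiso hθi δ⟩ s (Finset.mem_filter.2 ⟨hs, hi⟩)

/-- Away from the zero polynomial the traceless integral polynomials form a compact set, so finitely
many of the neighbourhoods of `exists_nhds_containedInFiniteExtension` suffice. -/
theorem containedInFiniteExtension_integralStableSets [LocallyCompactSpace F]
    (hiso : ∀ (σ : Gal(Ω/F)) (x : Ω), ‖σ x‖ = ‖x‖)
    {n : ℕ} (ih : ∀ K : IntermediateField F Ω, FiniteDimensional F K →
      ContainedInFiniteExtension F {S | S.card ≤ n ∧ IsGalStable K S})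
    [FiniteDimensional F K] {r : ℝ} (hr : 0 < r) :
    ContainedInFiniteExtension F (integralStableSets K (n + 1)
      {g | (∀ i, g i ∈ K ∧ ‖g i‖ ≤ 1) ∧ g (Fin.last n) = 0 ∧ r ≤ ‖g‖}) := by
  refine (isCompact_traceless_intermediateField n r).induction_on
    (p := fun T => ContainedInFiniteExtension F (integralStableSets K (n + 1) T)) ?_ ?_ ?_ ?_
  · exact ⟨⊥, inferInstance, fun S hS => hS.2.2.2.elim⟩
  · refine fun T T' hT h => h.mono ?_
    rintro S ⟨hcard, hS, hS1, hST⟩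
    exact ⟨hcard, hS, hS1, hT hST⟩
  · refine fun T T' h h' => (h.union h').mono ?_
    rintro S ⟨hcard, hS, hS1, hT | hT⟩
    exacts [Or.inl ⟨hcard, hS, hS1, hT⟩, Or.inr ⟨hcard, hS, hS1, hT⟩]
  · rintro g ⟨hg, hlast, hrg⟩
    obtain ⟨t, ht, h⟩ := exists_nhds_containedInFiniteExtension (K := K) hiso ih
      (fun i => (hg i).2) hlast
      (norm_pos_iff.1 (hr.trans_le hrg))
    exact ⟨t, mem_nhdsWithin_of_mem_nhds ht, h⟩

theorem IsGalStable.mem_integralStableSets {n : ℕ} (hcard : S.card = n + 1) (hS : IsGalStable K S)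
    (hS1 : ∀ s ∈ S, ‖s‖ ≤ 1) (hsum : ∑ s ∈ S, s = 0) {r : ℝ} (hr : 0 ≤ r)
    (hrS : ∃ s ∈ S, r ≤ ‖s‖) : S ∈ integralStableSets K (n + 1)
      {g | (∀ i, g i ∈ K ∧ ‖g i‖ ≤ 1) ∧ g (Fin.last n) = 0 ∧ r ^ (n + 1) ≤ ‖g‖} := by
  refine ⟨hcard, hS, hS1,
    fun i => ⟨hS.coeff_mem i, norm_coeff_prod_X_sub_C_le_one S hS1 i⟩, ?_, ?_⟩
  · simpa [hcard, hsum] using prod_X_sub_C_coeff_card_pred S (fun s => s) (by omega)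
  · obtain ⟨s, hs, hrs⟩ := hrS
    obtain ⟨i, hi⟩ := exists_norm_pow_le_of_monicOfCoeffs_eval_eq_zero (x := s)
      (f := fun i : Fin (n + 1) => (∏ s ∈ S, (X - C s)).coeff i) <| by
        rw [monicOfCoeffs_coeff_prod_X_sub_C hcard, eval_prod]
        exact Finset.prod_eq_zero hs (by simp)
    calc r ^ (n + 1) ≤ ‖s‖ ^ (n + 1) := pow_le_pow_left₀ hr hrs _
      _ ≤ ‖(∏ s ∈ S, (X - C s)).coeff i‖ * ‖s‖ ^ (i : ℕ) := hi
      _ ≤ ‖(∏ s ∈ S, (X - C s)).coeff i‖ :=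
        mul_le_of_le_one_right (norm_nonneg _) (pow_le_one₀ (norm_nonneg s) (hS1 s hs))
      _ ≤ _ := norm_le_pi_norm (fun i : Fin (n + 1) => (∏ s ∈ S, (X - C s)).coeff i) i

theorem containedInFiniteExtension_isGalStable [LocallyCompactSpace F]
    (hiso : ∀ (σ : Gal(Ω/F)) (x : Ω), ‖σ x‖ = ‖x‖) (n : ℕ) (K : IntermediateField F Ω)
    [hK : FiniteDimensional F K] :
    ContainedInFiniteExtension F {S | S.card ≤ n ∧ IsGalStable K S} := by
  classical
  induction n generalizing K with
  | zero => exact ⟨⊥, inferInstance, fun S hS s hs => absurd hs (by simp_all)⟩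
  | succ n ih =>
    obtain ⟨c, hc⟩ := NormedField.exists_one_lt_norm F
    have hc0 : 0 < ‖c‖⁻¹ := inv_pos.2 (one_pos.trans hc)
    have := charZero_of_injective_algebraMap (algebraMap F Ω).injective
    obtain ⟨M, hM, hMS⟩ := (ih K).union (containedInFiniteExtension_integralStableSets (K := K) hiso
      (fun K _ => ih K) (pow_pos hc0 (n + 1)))
    refine ⟨M ⊔ K, IntermediateField.finiteDimensional_sup M K, ?_⟩
    rintro S ⟨hcard, hS⟩ s hs
    obtain hcard | hcard := Nat.le_succ_iff.1 hcard
    · exact (le_sup_left : M ≤ M ⊔ K) (hMS S (Or.inl ⟨hcard, hS⟩) s hs)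
    have hKM : K ≤ M ⊔ K := le_sup_right
    by_cases hSK : ∀ s ∈ S, s ∈ K
    · exact hKM (hSK s hs)
    obtain ⟨t, ht, d, hd, hsum, hle, hge⟩ := hS.exists_normalized hc hSK
    have hinj : Function.Injective fun s : Ω => d • (s - t) :=
      (smul_right_injective Ω hd).comp (sub_left_injective (b := t))
    have himage := (hS.image_affine ht d).mem_integralStableSets
      (by rw [Finset.card_image_of_injective _ hinj, hcard]) (by simpa using hle)
      (by rwa [Finset.sum_image hinj.injOn]) hc0.le (by simpa using hge)
    have hmem := hMS _ (Or.inr himage) _ (Finset.mem_image_of_mem _ hs)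
    rw [← sub_add_cancel s t, ← inv_smul_smul₀ hd (s - t)]
    exact add_mem ((M ⊔ K).smul_mem ((le_sup_left : M ≤ M ⊔ K) hmem)) (hKM ht)

end Krasner

section Descent

variable {F Ω ι : Type*} [Field F] [Field Ω] [Algebra F Ω] [Fintype ι] [DecidableEq ι]

/-- A vector and an invertible matrix whose columns satisfy the same equivariance are related by a
Galois-invariant, hence rational, coordinate vector. -/
theorem exists_eq_mulVec_algebraMap [IsGalois F Ω] {Y : Matrix ι ι Ω} (hY : IsUnit Y.det)
    {P : Gal(Ω/F) → Matrix ι ι Ω} (hPY : ∀ σ : Gal(Ω/F), Y.map σ = P σ * Y) {y : ι → Ω}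
    (hPy : ∀ σ : Gal(Ω/F), ⇑σ ∘ y = P σ *ᵥ y) : ∃ c : ι → F, y = Y *ᵥ (algebraMap F Ω ∘ c) := by
  set c := Y⁻¹ *ᵥ y
  have hYc : Y *ᵥ c = y := by
    rw [Matrix.mulVec_mulVec, Matrix.mul_nonsing_inv _ hY, Matrix.one_mulVec]
  have hfixed (σ : Gal(Ω/F)) : ⇑σ ∘ c = c := by
    have hdet : IsUnit (Y.map σ).det := by
      have := hY.map (σ : Ω →+* Ω)
      rwa [RingHom.map_det] at this
    refine Matrix.mulVec_injective_of_isUnit ((Matrix.isUnit_iff_isUnit_det _).2 hdet) ?_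
    calc Y.map σ *ᵥ (⇑σ ∘ c) = ⇑σ ∘ (Y *ᵥ c) := funext fun i =>
          (RingHom.map_mulVec (σ : Ω →+* Ω) Y c i).symm
      _ = P σ *ᵥ (Y *ᵥ c) := by rw [hYc, hPy]
      _ = Y.map σ *ᵥ c := by rw [Matrix.mulVec_mulVec, hPY]
  choose a ha using fun j =>
    (InfiniteGalois.mem_range_algebraMap_iff_fixed (c j)).2 fun σ => congrFun (hfixed σ) j
  exact ⟨a, by rw [← hYc, ← funext ha]; rfl⟩

/-- The matrix sending `y` to the vector with entries `(τ i).2 * y (τ i).1`. -/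
def signedPerm (R : Type*) [Ring R] (τ : ι → ι × ℤˣ) : Matrix ι ι R :=
  Matrix.of fun i k => if (τ i).1 = k then ((τ i).2 : ℤ) else 0

/-- The matrix of odd powers `y i ^ (2 * j + 1)`. -/
def oddPowers {R : Type*} [Monoid R] {n : ℕ} (y : Fin n → R) : Matrix (Fin n) (Fin n) R :=
  Matrix.of fun i j => y i ^ (2 * (j : ℕ) + 1)

theorem det_oddPowers {R : Type*} [CommRing R] {n : ℕ} (y : Fin n → R) :
    (oddPowers y).det = (∏ i, y i) * (Matrix.vandermonde (y ^ 2)).det := by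
  rw [← Matrix.det_diagonal, ← Matrix.det_mul]
  congr 1
  ext i j
  simp [oddPowers, Matrix.vandermonde_apply, pow_succ', pow_mul]

theorem signedPerm_mulVec {R : Type*} [Ring R] (τ : ι → ι × ℤˣ) (y : ι → R) (i : ι) :
    (signedPerm R τ *ᵥ y) i = ((τ i).2 : ℤ) * y (τ i).1 := by
  simp [signedPerm, Matrix.mulVec, dotProduct]

theorem signedPerm_mul_oddPowers {R : Type*} [CommRing R] {n : ℕ} (τ : Fin n → Fin n × ℤˣ)
    (y : Fin n → R) : signedPerm R τ * oddPowers y = oddPowers (signedPerm R τ *ᵥ y) := by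
  ext i j
  change (signedPerm R τ *ᵥ fun k => oddPowers y k j) i =
    (signedPerm R τ *ᵥ y) i ^ (2 * (j : ℕ) + 1)
  rw [signedPerm_mulVec, signedPerm_mulVec]
  obtain hu | hu := Int.units_eq_one_or (τ i).2 <;>
    simp [oddPowers, hu, (odd_two_mul_add_one (j : ℕ)).neg_pow]

end Descent

section FiniteParametrization

open Polynomial

variable {p : ℕ} [Fact p.Prime] {Ω : Type*} [NormedField Ω] [NormedAlgebra ℚ_[p] Ω] {n : ℕ}

theorem IsSqRoots.exists_apply_eq_or_eq_neg {f : Fin n → ℤ_[p]} {y : Fin n → Ω} (h : IsSqRoots f y)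
    {A : Type*} [Field A] [Algebra ℚ_[p] A] (ψ φ : A →ₐ[ℚ_[p]] Ω) {a : A} {i : Fin n}
    (ha : ψ a = y i) : ∃ j, φ a = y j ∨ φ a = -y j := by
  set P : ℚ_[p][X] := (monicOfCoeffs f).map PadicInt.Coe.ringHom
  have hP (χ : A →ₐ[ℚ_[p]] Ω) : χ (aeval (a ^ 2) P) = ∏ j, (χ a ^ 2 - y j ^ 2) := by
    rw [← aeval_algHom_apply, ← eval_map_algebraMap, Polynomial.map_map, map_pow]
    refine (congrArg (eval (χ a ^ 2)) h).trans ?_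
    simp [eval_prod]
  have hroot : aeval (a ^ 2) P = 0 := by
    refine (map_eq_zero ψ).1 ?_
    rw [hP]
    exact Finset.prod_eq_zero (Finset.mem_univ i) (by rw [ha, sub_self])
  have hprod := hP φ
  rw [hroot, map_zero, eq_comm, Finset.prod_eq_zero_iff] at hprod
  obtain ⟨j, -, hj⟩ := hprod
  exact ⟨j, sq_eq_sq_iff_eq_or_eq_neg.1 (sub_eq_zero.1 hj)⟩

theorem IsSqRoots.isGalStable [DecidableEq Ω] {f : Fin n → ℤ_[p]} {y : Fin n → Ω}
    (h : IsSqRoots f y) (K : IntermediateField ℚ_[p] Ω) :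
    IsGalStable K (Finset.univ.image (Sum.elim y (-y))) := by
  intro σ _ s hs
  obtain ⟨i, -, rfl⟩ := Finset.mem_image.1 hs
  have hmem (i : Fin n) : ∃ j, σ (y i) = y j ∨ σ (y i) = -y j :=
    h.exists_apply_eq_or_eq_neg (AlgHom.id _ _) (σ : Ω →ₐ[ℚ_[p]] Ω) rfl
  rcases i with i | i <;> obtain ⟨j, hj | hj⟩ := hmem i <;> simp [hj]

theorem exists_finiteDimensional_forall_isSqRoots_mem [IsUltrametricDist Ω]
    [IsAlgClosure ℚ_[p] Ω] (hiso : ∀ (σ : Gal(Ω/ℚ_[p])) (x : Ω), ‖σ x‖ = ‖x‖) (n : ℕ) :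
    ∃ M : IntermediateField ℚ_[p] Ω, FiniteDimensional ℚ_[p] M ∧
      ∀ (f : Fin n → ℤ_[p]) (y : Fin n → Ω), IsSqRoots f y → ∀ i, y i ∈ M := by
  classical
  obtain ⟨M, hM, hMS⟩ := containedInFiniteExtension_isGalStable hiso (n + n) ⊥
  exact ⟨M, hM, fun f y h i => hMS _ ⟨Finset.card_image_le.trans (by simp), h.isGalStable ⊥⟩ _
    (Finset.mem_image.2 ⟨Sum.inl i, Finset.mem_univ _, rfl⟩)⟩

theorem IsSqRoots.exists_comp_eq_signedPerm_mulVec {f : Fin n → ℤ_[p]} {y : Fin n → Ω}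
    (h : IsSqRoots f y) {M : IntermediateField ℚ_[p] Ω} (hM : ∀ i, y i ∈ M) :
    ∃ τ : (M →ₐ[ℚ_[p]] Ω) → Fin n → Fin n × ℤˣ,
      ∀ σ : Gal(Ω/ℚ_[p]), ⇑σ ∘ y = signedPerm Ω (τ ((σ : Ω →ₐ[ℚ_[p]] Ω).comp M.val)) *ᵥ y := by
  have hτ (φ : M →ₐ[ℚ_[p]] Ω) (i : Fin n) :
      ∃ x : Fin n × ℤˣ, φ ⟨y i, hM i⟩ = (x.2 : ℤ) * y x.1 := by
    obtain ⟨j, hj | hj⟩ := h.exists_apply_eq_or_eq_neg M.val φ (a := ⟨y i, hM i⟩) rfl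
    exacts [⟨(j, 1), by simp [hj]⟩, ⟨(j, -1), by simp [hj]⟩]
  choose τ hτ using hτ
  exact ⟨τ, fun σ => funext fun i =>
    (hτ ((σ : Ω →ₐ[ℚ_[p]] Ω).comp M.val) i).trans (signedPerm_mulVec _ _ _).symm⟩

variable [IsUltrametricDist Ω]

theorem IsSqRoots.norm_le_one {f : Fin n → ℤ_[p]} {y : Fin n → Ω} (h : IsSqRoots f y)
    (i : Fin n) : ‖y i‖ ≤ 1 := by
  have hsq : ‖y i ^ 2‖ ≤ 1 := by
    refine norm_le_one_of_monicOfCoeffs_eval_eq_zero (f := padicIntEmb Ω ∘ f)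
      (fun i => (norm_padicIntEmb Ω _).trans_le (PadicInt.norm_le_one _)) ?_
    rw [← map_monicOfCoeffs, show _ = _ from h, eval_prod]
    exact Finset.prod_eq_zero (Finset.mem_univ i) (by simp)
  rw [norm_pow] at hsq
  exact (pow_le_one_iff_of_nonneg (norm_nonneg _) two_ne_zero).1 hsq

/-- If `Y *ᵥ c` is integral then `c` has bounded denominators, which are absorbed into `Y'`. -/
theorem exists_forall_mulVec_eq_mulVec_padicIntEmb {ι : Type*} [Fintype ι] [DecidableEq ι]
    {Y : Matrix ι ι Ω} (hY : IsUnit Y.det) : ∃ Y' : Matrix ι ι Ω, ∀ c : ι → ℚ_[p],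
      (∀ i, ‖(Y *ᵥ (algebraMap ℚ_[p] Ω ∘ c)) i‖ ≤ 1) →
        ∃ c' : ι → ℤ_[p], Y *ᵥ (algebraMap ℚ_[p] Ω ∘ c) = Y' *ᵥ (padicIntEmb Ω ∘ c') := by
  obtain ⟨B, hB⟩ := (Set.finite_range fun x : ι × ι => ‖Y⁻¹ x.1 x.2‖).bddAbove
  obtain ⟨b, hb⟩ := NormedField.exists_lt_norm ℚ_[p] (max B 0)
  have hb0 : 0 < ‖b‖ := (le_max_right _ _).trans_lt hb
  refine ⟨algebraMap ℚ_[p] Ω b • Y, fun c hc => ?_⟩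
  have hcb (j : ι) : ‖c j / b‖ ≤ 1 := by
    have h := norm_mulVec_le hb0.le (Y := Y⁻¹)
      (fun i j => (hB ⟨(i, j), rfl⟩).trans ((le_max_left _ _).trans hb.le)) zero_le_one hc j
    rw [Matrix.mulVec_mulVec, Matrix.nonsing_inv_mul _ hY, Matrix.one_mulVec, mul_one,
      Function.comp_apply, norm_algebraMap'] at h
    rwa [norm_div, div_le_one hb0]
  refine ⟨fun j => ⟨c j / b, hcb j⟩, ?_⟩
  rw [Matrix.smul_mulVec, ← Matrix.mulVec_smul]
  congr 1
  ext j
  change algebraMap ℚ_[p] Ω (c j) = algebraMap ℚ_[p] Ω b * algebraMap ℚ_[p] Ω (c j / b)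
  rw [← map_mul, mul_div_cancel₀ _ (norm_pos_iff.1 hb0)]

theorem exists_finite_parametrization_isSqRoots [IsAlgClosure ℚ_[p] Ω]
    (hiso : ∀ (σ : Gal(Ω/ℚ_[p])) (x : Ω), ‖σ x‖ = ‖x‖) (n : ℕ) :
    ∃ 𝒴 : Set (Matrix (Fin n) (Fin n) Ω), 𝒴.Finite ∧
      ∀ (f : Fin n → ℤ_[p]) (y : Fin n → Ω), IsSqRoots f y → pairDisc y ≠ 0 →
        ∃ Y ∈ 𝒴, ∃ c : Fin n → ℤ_[p], y = Y *ᵥ (padicIntEmb Ω ∘ c) := by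
  obtain ⟨M, hM, hMy⟩ :=
    exists_finiteDimensional_forall_isSqRoots_mem (p := p) hiso n
  let HasType (τ : (M →ₐ[ℚ_[p]] Ω) → Fin n → Fin n × ℤˣ) (y : Fin n → Ω) : Prop :=
    ∀ σ : Gal(Ω/ℚ_[p]), ⇑σ ∘ y = signedPerm Ω (τ ((σ : Ω →ₐ[ℚ_[p]] Ω).comp M.val)) *ᵥ y
  have hparam (τ) : ∃ Y : Matrix (Fin n) (Fin n) Ω, ∀ y, (∀ i, ‖y i‖ ≤ 1) → pairDisc y ≠ 0 →
      HasType τ y → ∃ c : Fin n → ℤ_[p], y = Y *ᵥ (padicIntEmb Ω ∘ c) := by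
    by_cases hex : ∃ y₀, pairDisc y₀ ≠ 0 ∧ HasType τ y₀
    · obtain ⟨y₀, hdisc, hτ₀⟩ := hex
      have hdet : IsUnit (oddPowers y₀).det := by
        rw [pairDisc_eq_det] at hdisc
        rw [det_oddPowers, isUnit_iff_ne_zero]
        refine mul_ne_zero (Finset.prod_ne_zero_iff.2 fun i _ hi => hdisc ?_) fun h => hdisc ?_
        · rw [Finset.prod_eq_zero (Finset.mem_univ i) (by simp [hi]), zero_pow two_ne_zero,
            zero_mul]
        · rw [h, norm_zero, zero_pow four_ne_zero, mul_zero]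
      obtain ⟨Y, hY⟩ := exists_forall_mulVec_eq_mulVec_padicIntEmb (p := p) hdet
      refine ⟨Y, fun y hy _ hτ => ?_⟩
      have heq (σ : Gal(Ω/ℚ_[p])) : (oddPowers y₀).map σ =
          signedPerm Ω (τ ((σ : Ω →ₐ[ℚ_[p]] Ω).comp M.val)) * oddPowers y₀ := by
        rw [signedPerm_mul_oddPowers, ← hτ₀]
        ext i j
        simp [oddPowers]
      obtain ⟨c, rfl⟩ := exists_eq_mulVec_algebraMap hdet heq hτ
      exact hY c hy
    · exact ⟨0, fun y _ hdisc hτ => absurd ⟨y, hdisc, hτ⟩ hex⟩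
  choose Y hY using hparam
  refine ⟨Set.range Y, Set.finite_range Y, fun f y h hdisc => ?_⟩
  obtain ⟨τ, hτ⟩ := h.exists_comp_eq_signedPerm_mulVec (hMy f y h)
  exact ⟨Y τ, ⟨τ, rfl⟩, hY τ y h.norm_le_one hdisc hτ⟩

theorem exists_volume_exists_isSqRoots_le [NeZero n] [IsAlgClosure ℚ_[p] Ω]
    (hiso : ∀ (σ : Gal(Ω/ℚ_[p])) (x : Ω), ‖σ x‖ = ‖x‖) :
    ∃ δ : ℝ, 0 < δ ∧ ∃ C : ℝ, 0 ≤ C ∧ ∀ v, 0 < v →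
      volume {f : Fin n → ℤ_[p] | ∃ y : Fin n → Ω, IsSqRoots f y ∧ pairDisc y = v} ≤
        ENNReal.ofReal (C * v ^ (1 / 4 + δ)) := by
  obtain ⟨𝒴, hfin, h𝒴⟩ := exists_finite_parametrization_isSqRoots (p := p) hiso n
  obtain ⟨δ, hδ, hvol⟩ := exists_volume_isSqRoots_mulVec_le (p := p) (Ω := Ω) (n := n)
  choose C hC hvol using hvol
  lift 𝒴 to Finset (Matrix (Fin n) (Fin n) Ω) using hfin
  refine ⟨δ, hδ, ∑ Y ∈ 𝒴, C Y, Finset.sum_nonneg fun Y _ => hC Y, fun v hv => ?_⟩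
  calc _ ≤ volume (⋃ Y ∈ 𝒴, {f : Fin n → ℤ_[p] | ∃ c : Fin n → ℤ_[p],
        pairDisc (Y *ᵥ (padicIntEmb Ω ∘ c)) = v ∧ IsSqRoots f (Y *ᵥ (padicIntEmb Ω ∘ c))}) := by
        refine measure_mono ?_
        rintro f ⟨y, hf, rfl⟩
        obtain ⟨Y, hY, c, rfl⟩ := h𝒴 f y hf hv.ne'
        exact Set.mem_biUnion hY ⟨c, rfl, hf⟩
    _ ≤ ∑ Y ∈ 𝒴, ENNReal.ofReal (C Y * v ^ (1 / 4 + δ)) :=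
        (measure_biUnion_finset_le _ _).trans (Finset.sum_le_sum fun Y _ => hvol Y v hv)
    _ = ENNReal.ofReal ((∑ Y ∈ 𝒴, C Y) * v ^ (1 / 4 + δ)) := by
        rw [Finset.sum_mul, ENNReal.ofReal_sum_of_nonneg fun Y _ =>
          mul_nonneg (hC Y) (Real.rpow_nonneg hv.le _)]

theorem padicAlgCl_norm_galois (σ : Gal(PadicAlgCl p/ℚ_[p])) (x : PadicAlgCl p) :
    ‖σ x‖ = ‖x‖ := by
  rw [← PadicAlgCl.spectralNorm_eq, ← PadicAlgCl.spectralNorm_eq]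
  exact (spectralNorm_eq_of_equiv σ x).symm

end FiniteParametrization

section AdMatrix

open scoped Kronecker

variable {ι R : Type*} [DecidableEq ι] [CommRing R]

/-- The matrix of `ad M : N ↦ M * N - N * M` in the basis of elementary matrices. -/
def adMatrix (M : Matrix ι ι R) : Matrix (ι × ι) (ι × ι) R :=
  M ⊗ₖ (1 : Matrix ι ι R) - (1 : Matrix ι ι R) ⊗ₖ Mᵀ

theorem map_adMatrix {S : Type*} [CommRing S] (φ : R →+* S) (M : Matrix ι ι R) :
    (adMatrix M).map φ = adMatrix (M.map φ) := by
  ext ⟨i, k⟩ ⟨j, l⟩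
  simp [adMatrix, Matrix.one_apply, apply_ite φ]

theorem adMatrix_smul (c : R) (M : Matrix ι ι R) : adMatrix (c • M) = c • adMatrix M := by
  rw [adMatrix, Matrix.transpose_smul, Matrix.smul_kronecker, Matrix.kronecker_smul, ← smul_sub,
    adMatrix]

@[fun_prop]
theorem continuous_adMatrix [TopologicalSpace R] [IsTopologicalRing R] :
    Continuous (adMatrix : Matrix ι ι R → Matrix (ι × ι) (ι × ι) R) := by
  refine continuous_matrix fun i j => ?_
  simp only [adMatrix, Matrix.sub_apply, Matrix.kroneckerMap_apply, Matrix.transpose_apply]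
  fun_prop

end AdMatrix

section AdjointCharpoly

open Polynomial

open scoped Kronecker

variable {ι κ R : Type*} [Fintype ι] [DecidableEq ι] [Fintype κ] [DecidableEq κ] [CommRing R]

theorem charpoly_kronecker_sub_kronecker_eq_det (M : Matrix ι ι R) (N : Matrix κ κ R) :
    (M ⊗ₖ (1 : Matrix κ κ R) - (1 : Matrix ι ι R) ⊗ₖ N).charpoly =
      (aeval (Matrix.scalar κ X + N.map C) M.charpoly).det := by
  set f : R[X] →ₐ[R] Matrix κ κ R[X] := aeval (Matrix.scalar κ X + N.map C)
  have hcomp : (M.charmatrix.map f.toRingHom).comp ι ι κ κ R[X] =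
      (M ⊗ₖ (1 : Matrix κ κ R) - (1 : Matrix ι ι R) ⊗ₖ N).charmatrix := by
    ext1 ⟨i, k⟩ ⟨j, l⟩
    by_cases hij : i = j <;> by_cases hkl : k = l <;>
      simp [f, hij, hkl, Matrix.algebraMap_matrix_apply]
    all_goals ring
  rw [Matrix.charpoly, ← hcomp, ← Matrix.det_det]
  rfl

theorem det_scalar_sub_C_add_map_C {N : Matrix κ κ R} {e : κ → R}
    (hN : N.charpoly = ∏ j, (X - C (e j))) (a : R) :
    (Matrix.scalar κ (X - C a) + N.map C).det = ∏ j, (X - C (a - e j)) := by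
  have hneg : Matrix.scalar κ (X - C a) + N.map C = -(Matrix.scalar κ (C a - X) - N.map C) := by
    rw [neg_sub, ← neg_sub X, map_neg, sub_neg_eq_add, add_comm]
  rw [hneg, Matrix.det_neg, ← Matrix.eval_charpoly, Matrix.charpoly_map, hN, Polynomial.map_prod,
    eval_prod, ← Finset.card_univ, ← Finset.prod_const, ← Finset.prod_mul_distrib]
  refine Finset.prod_congr rfl fun j _ => ?_
  simp only [Polynomial.map_sub, map_X, map_C, eval_sub, eval_X, eval_C, map_sub]
  ring

theorem charpoly_kronecker_sub_kronecker {M : Matrix ι ι R} {d : ι → R}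
    (hM : M.charpoly = ∏ i, (X - C (d i))) {N : Matrix κ κ R} {e : κ → R}
    (hN : N.charpoly = ∏ j, (X - C (e j))) :
    (M ⊗ₖ (1 : Matrix κ κ R) - (1 : Matrix ι ι R) ⊗ₖ N).charpoly =
      ∏ i, ∏ j, (X - C (d i - e j)) := by
  set f : R[X] →ₐ[R] Matrix κ κ R[X] := aeval (Matrix.scalar κ X + N.map C)
  have hprod : (f (∏ i, (X - C (d i)))).det = ∏ i, (f (X - C (d i))).det :=
    map_prod (Matrix.detMonoidHom.comp (f : R[X] →* Matrix κ κ R[X])) _ _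
  rw [charpoly_kronecker_sub_kronecker_eq_det, hM, hprod]
  refine Finset.prod_congr rfl fun i _ => ?_
  rw [← det_scalar_sub_C_add_map_C hN, map_sub, aeval_X, aeval_C, map_sub,
    sub_add_eq_add_sub]
  rfl

theorem toMatrix_mulLeft_sub_mulRight (M : Matrix ι ι R) :
    LinearMap.toMatrix (Matrix.stdBasis R ι ι) (Matrix.stdBasis R ι ι)
      (LinearMap.mulLeft R M - LinearMap.mulRight R M) = adMatrix M := by
  ext ⟨i, k⟩ ⟨j, l⟩
  rw [LinearMap.toMatrix_apply, Matrix.stdBasis_eq_single, adMatrix]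
  by_cases hij : i = j <;> by_cases hkl : k = l <;>
    simp [Matrix.stdBasis, Matrix.mul_apply, Matrix.single_apply, hij, hkl, eq_comm (a := l),
      eq_comm (a := j)]

theorem charpoly_adMatrix {M : Matrix ι ι R} {d : ι → R} (hM : M.charpoly = ∏ i, (X - C (d i))) :
    (adMatrix M).charpoly = ∏ i, ∏ j, (X - C (d i - d j)) :=
  charpoly_kronecker_sub_kronecker hM ((Matrix.charpoly_transpose M).trans hM)

theorem charpoly_fromBlocks_zero_zero (A B : Matrix ι ι R) :
    (Matrix.fromBlocks 0 A B 0).charpoly = (A * B).charpoly.comp (X ^ 2) := by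
  set A' := A.map (C : R →+* R[X])
  set B' := B.map (C : R →+* R[X])
  have hcomm : Matrix.scalar ι X * B' = B' * Matrix.scalar ι X :=
    (Matrix.scalar_commute X (fun _ => Commute.all _ _) B').eq
  have hmul :
      (Matrix.fromBlocks 0 A B 0).charmatrix * Matrix.fromBlocks (Matrix.scalar ι X) 0 B' 1 =
        Matrix.fromBlocks (Matrix.scalar ι (X ^ 2) - (A * B).map C) (-A') 0
          (Matrix.scalar ι X) := by
    rw [Matrix.charmatrix_fromBlocks, Matrix.fromBlocks_multiply, Matrix.charmatrix_zero, hcomm,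
      ← map_mul, ← sq, Matrix.map_mul]
    simp [A', B', sub_eq_add_neg]
  have hdet := congrArg Matrix.det hmul
  have hX : (Matrix.scalar ι (X : R[X])).det = X ^ Fintype.card ι := by simp
  rw [Matrix.det_mul, Matrix.det_fromBlocks_zero₁₂, Matrix.det_fromBlocks_zero₂₁, hX,
    Matrix.det_one, mul_one] at hdet
  rw [Matrix.charpoly, (isRegular_X_pow (R := R) (Fintype.card ι)).right hdet,
    ← Matrix.eval_charpoly, Matrix.charpoly_map, eval_map]
  rfl

theorem coeff_card_prod_prod_X_sub_C_sub (d : ι → R) :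
    (∏ i, ∏ j, (X - C (d i - d j))).coeff (Fintype.card ι) = ∏ i, ∏ j ∈ {i}ᶜ, (d j - d i) := by
  have hfactor (i : ι) : ∏ j, (X - C (d i - d j)) = X * ∏ j ∈ {i}ᶜ, (X - C (d i - d j)) := by
    rw [← Finset.prod_mul_prod_compl {i}]
    simp
  simp_rw [hfactor]
  rw [Finset.prod_mul_distrib, Finset.prod_const, Finset.card_univ, coeff_X_pow_mul', if_pos le_rfl,
    Nat.sub_self, coeff_zero_eq_eval_zero]
  simp [eval_prod]

end AdjointCharpoly

section WeylPairDisc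

open Polynomial

variable {p : ℕ} [Fact p.Prime] {Ω : Type*} [NormedField Ω] [NormedAlgebra ℚ_[p] Ω] {n : ℕ}

theorem weylDiscriminantGuoJacquet_eq_coeff_charpoly_adMatrix
    (X : Matrix (Fin n) (Fin n) ℚ_[p] × Matrix (Fin n) (Fin n) ℚ_[p]) :
    weylDiscriminantGuoJacquet p n X =
      (adMatrix (Matrix.fromBlocks 0 X.1 X.2 0)).charpoly.coeff (2 * n) := by
  rw [weylDiscriminantGuoJacquet, ← toMatrix_mulLeft_sub_mulRight, LinearMap.charpoly_toMatrix]

theorem norm_weylDiscriminantGuoJacquet_eq_pairDisc {A B : Matrix (Fin n) (Fin n) ℚ_[p]}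
    {y : Fin n → Ω}
    (hy : (A * B).charpoly.map (algebraMap ℚ_[p] Ω) = ∏ i, (X - C (y i ^ 2))) :
    ‖weylDiscriminantGuoJacquet p n (A, B)‖ = pairDisc y := by
  set φ := algebraMap ℚ_[p] Ω
  set z := Sum.elim y (-y)
  set M := Matrix.fromBlocks 0 A B 0 with hM
  have hcharpoly : (M.map φ).charpoly = ∏ a, (X - C (z a)) := by
    rw [Matrix.charpoly_map, hM, charpoly_fromBlocks_zero_zero, map_comp, hy,
      Fintype.prod_sum_type, ← Finset.prod_mul_distrib, Polynomial.map_pow, map_X, prod_comp]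
    refine Finset.prod_congr rfl fun i _ => ?_
    simp [z]
    ring
  have hcard : 2 * n = Fintype.card (Fin n ⊕ Fin n) := by simp [two_mul]
  rw [← norm_algebraMap' Ω, weylDiscriminantGuoJacquet_eq_coeff_charpoly_adMatrix, ← coeff_map,
    ← Matrix.charpoly_map, map_adMatrix, charpoly_adMatrix hcharpoly, hcard,
    coeff_card_prod_prod_X_sub_C_sub, pairDisc, normDisc_eq_prod_prod_compl]
  simp only [norm_prod]
  exact Finset.prod_congr rfl fun a _ => Finset.prod_congr rfl fun b _ => norm_sub_rev _ _

theorem exists_isSqRoots_norm_weylDiscriminantGuoJacquet [IsAlgClosed Ω]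
    (A B : Matrix (Fin n) (Fin n) ℤ_[p]) : ∃ y : Fin n → Ω,
      IsSqRoots (fun k : Fin n => (A * B).charpoly.coeff k) y ∧
      ‖weylDiscriminantGuoJacquet p n (A.map (↑), B.map (↑))‖ = pairDisc y := by
  have hcoeff : monicOfCoeffs (fun k : Fin n => (A * B).charpoly.coeff k) = (A * B).charpoly :=
    monicOfCoeffs_coeff (A * B).charpoly_monic (by simp)
  obtain ⟨θ, hθ⟩ := exists_monicOfCoeffs_eq_prod
    (padicIntEmb Ω ∘ fun k : Fin n => (A * B).charpoly.coeff k)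
  choose y hy using fun i => IsAlgClosed.exists_pow_nat_eq (θ i) two_pos
  simp only [← hy, ← map_monicOfCoeffs] at hθ
  refine ⟨y, hθ, norm_weylDiscriminantGuoJacquet_eq_pairDisc ?_⟩
  rw [← hθ, hcoeff, padicIntEmb, ← Polynomial.map_map, ← Matrix.charpoly_map (A * B),
    Matrix.map_mul]
  rfl

end WeylPairDisc

section HaarTransfer

theorem integrableOn_range_of_integrable_comp {G H E : Type*} [AddGroup G] [TopologicalSpace G]
    [IsTopologicalAddGroup G] [LocallyCompactSpace G] [SecondCountableTopology G] [MeasureSpace G]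
    [BorelSpace G] [(volume : Measure G).IsAddHaarMeasure] [AddGroup H] [TopologicalSpace H]
    [IsTopologicalAddGroup H] [MeasurableSpace H] [BorelSpace H] (μ : Measure H)
    [μ.IsAddHaarMeasure] [NormedAddCommGroup E] {φ : G →+ H} (hφ : Topology.IsOpenEmbedding φ)
    {f : H → E} (hf : Integrable (f ∘ φ)) : IntegrableOn f (Set.range φ) μ := by
  have hcomap : (μ.comap φ).IsAddHaarMeasure :=
    Measure.IsAddHaarMeasure.comap (mH := ContinuousAdd.measurableAdd) μ hφ
  rw [hφ.measurableEmbedding.integrableOn_range_iff_comap,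
    Measure.isAddLeftInvariant_eq_smul (μ.comap φ) volume]
  exact hf.smul_measure_nnreal

end HaarTransfer

section WeylDiscriminant

open Polynomial

variable {p : ℕ} [Fact p.Prime] {n : ℕ}

theorem charpoly_smul_coeff_mul_pow {R ι : Type*} [CommRing R] [Fintype ι] [DecidableEq ι]
    (c : R) (N : Matrix ι ι R) (k : ℕ) :
    (c • N).charpoly.coeff k * c ^ k = c ^ Fintype.card ι * N.charpoly.coeff k := by
  have hcharmatrix : (c • N).charmatrix.map (compRingHom (C c * X)) = C c • N.charmatrix := by
    ext1 i j
    by_cases hij : i = j <;> simp [hij, mul_sub]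
  have hcharpoly : (c • N).charpoly.comp (C c * X) = C (c ^ Fintype.card ι) * N.charpoly := by
    rw [Matrix.charpoly, Matrix.charpoly, C_pow, ← Matrix.det_smul, ← hcharmatrix,
      ← coe_compRingHom_apply, RingHom.map_det]
    rfl
  rw [← comp_C_mul_X_coeff, hcharpoly, coeff_C_mul]

theorem weylDiscriminantGuoJacquet_smul_mul_pow (c : ℚ_[p])
    (X : Matrix (Fin n) (Fin n) ℚ_[p] × Matrix (Fin n) (Fin n) ℚ_[p]) :
    weylDiscriminantGuoJacquet p n (c • X) * c ^ (2 * n) =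
      c ^ Fintype.card ((Fin n ⊕ Fin n) × (Fin n ⊕ Fin n)) * weylDiscriminantGuoJacquet p n X := by
  have hblocks : Matrix.fromBlocks 0 (c • X).1 (c • X).2 0 = c • Matrix.fromBlocks 0 X.1 X.2 0 := by
    simp [Matrix.fromBlocks_smul]
  rw [weylDiscriminantGuoJacquet_eq_coeff_charpoly_adMatrix, hblocks, adMatrix_smul,
    charpoly_smul_coeff_mul_pow, weylDiscriminantGuoJacquet_eq_coeff_charpoly_adMatrix]

theorem continuous_weylDiscriminantGuoJacquet : Continuous (weylDiscriminantGuoJacquet p n) := by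
  simp only [_root_.funext weylDiscriminantGuoJacquet_eq_coeff_charpoly_adMatrix]
  exact continuous_charpoly_coeff (continuous_adMatrix.comp
    (continuous_const.matrix_fromBlocks continuous_fst continuous_snd continuous_const)) _

/-- The `ℤ_p`-lattice `M_n(ℤ_p) × M_n(ℤ_p)` mapped into `M_n(ℚ_p) × M_n(ℚ_p)` and scaled by `c`.
The images of these embeddings exhaust `M_n(ℚ_p) × M_n(ℚ_p)`. -/
noncomputable def scaledLatticeEmb (n : ℕ) (c : ℚ_[p]) :
    Matrix (Fin n) (Fin n) ℤ_[p] × Matrix (Fin n) (Fin n) ℤ_[p] →+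
      Matrix (Fin n) (Fin n) ℚ_[p] × Matrix (Fin n) (Fin n) ℚ_[p] :=
  AddMonoidHom.mk' (fun x => c • (x.1.map (↑), x.2.map (↑))) fun x y => by
    rw [← smul_add]
    rfl

theorem isOpenEmbedding_matrix_map_padicInt_coe : Topology.IsOpenEmbedding
    fun A : Matrix (Fin n) (Fin n) ℤ_[p] => (A.map (↑) : Matrix (Fin n) (Fin n) ℚ_[p]) :=
  .piMap fun _ => .piMap fun _ => PadicInt.isOpenEmbedding_coe

theorem isOpenEmbedding_scaledLatticeEmb {c : ℚ_[p]} (hc : c ≠ 0) :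
    Topology.IsOpenEmbedding (scaledLatticeEmb n c) :=
  (Homeomorph.smulOfNeZero c hc).isOpenEmbedding.comp
    (isOpenEmbedding_matrix_map_padicInt_coe.prodMap isOpenEmbedding_matrix_map_padicInt_coe)

theorem exists_map_coe_eq_inv_smul {c : ℚ_[p]} {A : Matrix (Fin n) (Fin n) ℚ_[p]}
    (hA : ∀ i j, ‖A i j‖ ≤ ‖c‖) : ∃ B : Matrix (Fin n) (Fin n) ℤ_[p], B.map (↑) = c⁻¹ • A := by
  refine ⟨.of fun i j => ⟨c⁻¹ * A i j, ?_⟩, rfl⟩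
  rw [norm_mul, norm_inv]
  exact inv_mul_le_one_of_le₀ (hA i j) (norm_nonneg c)

theorem exists_mem_range_scaledLatticeEmb
    (X : Matrix (Fin n) (Fin n) ℚ_[p] × Matrix (Fin n) (Fin n) ℚ_[p]) :
    ∃ c : ℚ_[p], c ≠ 0 ∧ X ∈ Set.range (scaledLatticeEmb n c) := by
  obtain ⟨M, hM⟩ := (Set.finite_range fun i : (Fin n × Fin n) ⊕ (Fin n × Fin n) =>
    ‖i.elim (fun i => X.1 i.1 i.2) (fun i => X.2 i.1 i.2)‖).bddAbove
  obtain ⟨c, hc⟩ := NormedField.exists_lt_norm ℚ_[p] (max M 0)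
  have hc0 : c ≠ 0 := norm_pos_iff.1 ((le_max_right _ _).trans_lt hc)
  have hMc : M ≤ ‖c‖ := (le_max_left _ _).trans hc.le
  obtain ⟨A, hA⟩ := exists_map_coe_eq_inv_smul (A := X.1) fun i j =>
    (hM (Set.mem_range_self (.inl (i, j)))).trans hMc
  obtain ⟨B, hB⟩ := exists_map_coe_eq_inv_smul (A := X.2) fun i j =>
    (hM (Set.mem_range_self (.inr (i, j)))).trans hMc
  refine ⟨c, hc0, (A, B), ?_⟩
  change c • (A.map (↑), B.map (↑)) = X
  rw [hA, hB, ← Prod.smul_mk, smul_inv_smul₀ hc0]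

theorem norm_weylDiscriminantGuoJacquet_scaledLatticeEmb {c : ℚ_[p]} (hc : c ≠ 0)
    (x : Matrix (Fin n) (Fin n) ℤ_[p] × Matrix (Fin n) (Fin n) ℤ_[p]) :
    ‖weylDiscriminantGuoJacquet p n (scaledLatticeEmb n c x)‖ =
      ‖c‖ ^ Fintype.card ((Fin n ⊕ Fin n) × (Fin n ⊕ Fin n)) / ‖c‖ ^ (2 * n) *
        ‖weylDiscriminantGuoJacquet p n (x.1.map (↑), x.2.map (↑))‖ := by
  have h := congrArg norm
    (weylDiscriminantGuoJacquet_smul_mul_pow (n := n) c (x.1.map (↑), x.2.map (↑)))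
  simp only [norm_mul, norm_pow] at h
  rw [div_mul_eq_mul_div, eq_div_iff (pow_ne_zero _ (norm_ne_zero_iff.2 hc))]
  exact h

theorem exists_coe_eq_weylDiscriminantGuoJacquet (A B : Matrix (Fin n) (Fin n) ℤ_[p]) :
    ∃ z : ℤ_[p], (z : ℚ_[p]) = weylDiscriminantGuoJacquet p n (A.map (↑), B.map (↑)) := by
  have hblocks : Matrix.fromBlocks 0 (A.map (↑)) (B.map (↑)) 0 =
      (Matrix.fromBlocks 0 A B 0).map (algebraMap ℤ_[p] ℚ_[p]) := by
    rw [Matrix.fromBlocks_map, Matrix.map_zero _ (map_zero _)]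
    rfl
  refine ⟨(adMatrix (Matrix.fromBlocks 0 A B 0)).charpoly.coeff (2 * n), ?_⟩
  rw [weylDiscriminantGuoJacquet_eq_coeff_charpoly_adMatrix, hblocks, ← map_adMatrix,
    Matrix.charpoly_map, coeff_map]
  rfl

theorem exists_volume_norm_weylDiscriminantGuoJacquet_eq_le [NeZero n] :
    ∃ E : ℝ≥0∞, E < ⊤ ∧ ∃ s : ℝ, 1 / 4 < s ∧ ∀ v : ℝ, 0 < v →
      volume {x : Matrix (Fin n) (Fin n) ℤ_[p] × Matrix (Fin n) (Fin n) ℤ_[p] |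
        ‖weylDiscriminantGuoJacquet p n (x.1.map (↑), x.2.map (↑))‖ = v} ≤
          E * ENNReal.ofReal (v ^ s) := by
  obtain ⟨δ, hδ, C, hC, hvol⟩ := exists_volume_exists_isSqRoots_le (p := p) (n := n)
    (Ω := PadicAlgCl p) padicAlgCl_norm_galois
  obtain ⟨t, ht, ht1⟩ : ∃ t, 1 / 4 / (1 / 4 + δ) < t ∧ t < 1 :=
    exists_between ((div_lt_one (by positivity)).2 (by linarith))
  have ht0 : 0 < t := lt_trans (by positivity) ht
  obtain ⟨m, rfl⟩ := Nat.exists_eq_succ_of_ne_zero (NeZero.ne n)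
  obtain ⟨E, hE, hpush⟩ := exists_volume_charpoly_mul_mem_le (p := p) ht0 ht1 m
  refine ⟨E * ENNReal.ofReal C ^ t, ENNReal.mul_lt_top hE
    (ENNReal.rpow_lt_top_of_nonneg ht0.le ENNReal.ofReal_ne_top), (1 / 4 + δ) * t,
    (div_lt_iff₀' (by positivity)).1 ht, fun v hv => ?_⟩
  set S := {f : Fin (m + 1) → ℤ_[p] | ∃ y : Fin (m + 1) → PadicAlgCl p,
    IsSqRoots f y ∧ pairDisc y = v}
  calc _ ≤ volume {x : Matrix (Fin (m + 1)) (Fin (m + 1)) ℤ_[p] ×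
        Matrix (Fin (m + 1)) (Fin (m + 1)) ℤ_[p] |
          (fun k : Fin (m + 1) => (x.1 * x.2).charpoly.coeff k) ∈ S} := by
        refine measure_mono fun x hx => ?_
        obtain ⟨y, hy, hyx⟩ := exists_isSqRoots_norm_weylDiscriminantGuoJacquet
          (Ω := PadicAlgCl p) x.1 x.2
        exact ⟨y, hy, hyx.symm.trans hx⟩
    _ ≤ E * volume S ^ t := hpush S
    _ ≤ E * ENNReal.ofReal (C * v ^ (1 / 4 + δ)) ^ t := by gcongr; exact hvol v hv
    _ = _ := by
        rw [ENNReal.ofReal_mul hC, ENNReal.mul_rpow_of_nonneg _ _ ht0.le,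
          ENNReal.ofReal_rpow_of_pos (Real.rpow_pos_of_pos hv _), ← Real.rpow_mul hv.le, mul_assoc]

theorem exists_integrable_norm_weylDiscriminantGuoJacquet_rpow_neg [NeZero n] :
    ∃ s : ℝ, 1 / 4 < s ∧
      Integrable fun x : Matrix (Fin n) (Fin n) ℤ_[p] × Matrix (Fin n) (Fin n) ℤ_[p] =>
        ‖weylDiscriminantGuoJacquet p n (x.1.map (↑), x.2.map (↑))‖ ^ (-s) := by
  obtain ⟨E, hE, s', hs', hvol⟩ :=
    exists_volume_norm_weylDiscriminantGuoJacquet_eq_le (p := p) (n := n)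
  obtain ⟨s, hs, hss'⟩ := exists_between hs'
  have hmeas : Measurable fun x : Matrix (Fin n) (Fin n) ℤ_[p] × Matrix (Fin n) (Fin n) ℤ_[p] =>
      ‖weylDiscriminantGuoJacquet p n (x.1.map (↑), x.2.map (↑))‖ :=
    (continuous_weylDiscriminantGuoJacquet.comp
      (isOpenEmbedding_matrix_map_padicInt_coe.continuous.prodMap
        isOpenEmbedding_matrix_map_padicInt_coe.continuous)).norm.measurable
  refine ⟨s, hs, (lintegral_ofReal_ne_top_iff_integrable
    (hmeas.pow_const _).aestronglyMeasurable (.of_forall fun _ => by positivity)).1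
      (lintegral_ofReal_rpow_neg_lt_top (q := p) hmeas
        (mod_cast (Fact.out : p.Prime).one_lt) (fun x => ?_) hE (by linarith) hss' hvol).ne⟩
  obtain ⟨z, hz⟩ := exists_coe_eq_weylDiscriminantGuoJacquet x.1 x.2
  rw [← hz]
  exact padicInt_norm_eq_zero_or_eq_rpow z

set_option synthInstance.maxSize 4096 in
theorem exists_locallyIntegrable_norm_weylDiscriminantGuoJacquet_rpow_neg [NeZero n]
    [MeasurableSpace (Matrix (Fin n) (Fin n) ℚ_[p] × Matrix (Fin n) (Fin n) ℚ_[p])]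
    [BorelSpace (Matrix (Fin n) (Fin n) ℚ_[p] × Matrix (Fin n) (Fin n) ℚ_[p])] :
    ∃ s : ℝ, 1 / 4 < s ∧
      ∀ μ : Measure (Matrix (Fin n) (Fin n) ℚ_[p] × Matrix (Fin n) (Fin n) ℚ_[p]),
        μ.IsAddHaarMeasure →
        LocallyIntegrable (fun X => ‖weylDiscriminantGuoJacquet p n X‖ ^ (-s)) μ := by
  obtain ⟨s, hs, hint⟩ :=
    exists_integrable_norm_weylDiscriminantGuoJacquet_rpow_neg (p := p) (n := n)
  refine ⟨s, hs, fun μ _ X => ?_⟩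
  obtain ⟨c, hc, hX⟩ := exists_mem_range_scaledLatticeEmb X
  have hφ := isOpenEmbedding_scaledLatticeEmb (n := n) hc
  refine ⟨_, hφ.isOpen_range.mem_nhds hX, integrableOn_range_of_integrable_comp μ hφ ?_⟩
  refine (hint.const_mul ((‖c‖ ^ Fintype.card ((Fin n ⊕ Fin n) × (Fin n ⊕ Fin n)) /
    ‖c‖ ^ (2 * n)) ^ (-s))).congr (.of_forall fun x => ?_)
  rw [Function.comp_apply, norm_weylDiscriminantGuoJacquet_scaledLatticeEmb hc,
    Real.mul_rpow (by positivity) (norm_nonneg _)]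

end WeylDiscriminant

section LogBound

theorem max_one_neg_half_log_rpow_le {x ε r : ℝ} (hε : 0 < ε) (hr : 0 ≤ r) (hx : 0 < x)
    (hx1 : x ≤ 1) :
    max 1 (-(1 / 2) * Real.log x) ^ r ≤ (1 + (r + 1) / ε) ^ (r + 1) * x ^ (-ε) := by
  set e := ε / (r + 1) with he
  have he0 : 0 < e := by positivity
  have hone : 1 ≤ x ^ (-e) := Real.one_le_rpow_of_pos_of_le_one_of_nonpos hx hx1 (by linarith)
  have hlog : -Real.log x ≤ x ^ (-e) / e := by
    have h := Real.log_le_rpow_div (inv_nonneg.2 hx.le) he0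
    rwa [Real.log_inv, Real.inv_rpow hx.le, ← Real.rpow_neg hx.le] at h
  have hlog0 : 0 ≤ -Real.log x := neg_nonneg.2 (Real.log_nonpos hx.le hx1)
  have hmax : max 1 (-(1 / 2) * Real.log x) ≤ (1 + 1 / e) * x ^ (-e) := by
    have hdiv : 0 ≤ x ^ (-e) / e := by positivity
    rw [add_mul, one_mul, one_div_mul_eq_div]
    exact max_le (hone.trans (le_add_of_nonneg_right hdiv)) (by linarith)
  calc max 1 (-(1 / 2) * Real.log x) ^ r ≤ max 1 (-(1 / 2) * Real.log x) ^ (r + 1) :=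
        Real.rpow_le_rpow_of_exponent_le (le_max_left _ _) (by linarith)
    _ ≤ ((1 + 1 / e) * x ^ (-e)) ^ (r + 1) :=
        Real.rpow_le_rpow (by positivity) hmax (by linarith)
    _ = _ := by
        rw [Real.mul_rpow (by positivity) (by positivity), ← Real.rpow_mul hx.le, he, one_div_div,
          neg_mul, div_mul_cancel₀ _ (by positivity)]

theorem rpow_neg_mul_max_one_neg_half_log_rpow_le {x a s r : ℝ} (ha : 0 < a) (has : a < s)
    (hr : 0 ≤ r) (hx : 0 ≤ x) :
    x ^ (-a) * max 1 (-(1 / 2) * Real.log x) ^ r ≤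
      (1 + (r + 1) / (s - a)) ^ (r + 1) * x ^ (-s) + 1 := by
  have hsa : 0 < s - a := sub_pos.2 has
  rcases hx.eq_or_lt with rfl | hx0
  · rw [Real.zero_rpow (by linarith), zero_mul]
    positivity
  rcases le_total x 1 with hx1 | hx1
  · calc x ^ (-a) * max 1 (-(1 / 2) * Real.log x) ^ r
        ≤ x ^ (-a) * ((1 + (r + 1) / (s - a)) ^ (r + 1) * x ^ (-(s - a))) := by
          gcongr
          exact max_one_neg_half_log_rpow_le hsa hr hx0 hx1
      _ = (1 + (r + 1) / (s - a)) ^ (r + 1) * x ^ (-s) := by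
          rw [mul_left_comm, ← Real.rpow_add hx0]
          ring_nf
      _ ≤ _ := le_add_of_nonneg_right zero_le_one
  · have hlog := Real.log_nonneg hx1
    rw [max_eq_left (by linarith), Real.one_rpow, mul_one]
    exact (Real.rpow_le_one_of_one_le_of_nonpos hx1 (by linarith)).trans
      (le_add_of_nonneg_left (by positivity))

end LogBound

/-- For every real `r ≥ 0`, the function
`X ↦ ‖𝔇(X)‖_p^(−1/4) · (max {1, −(1/2)·log ‖𝔇(X)‖_p})^r` is locally integrable on
`M_n(ℚ_p) × M_n(ℚ_p)` with respect to any additive Haar measure. -/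
theorem weylDiscriminant_rpow_mul_log_pow_locallyIntegrable
    (p : ℕ) [Fact p.Prime] (n : ℕ) (hn : 1 ≤ n)
    [MeasurableSpace (Matrix (Fin n) (Fin n) ℚ_[p] × Matrix (Fin n) (Fin n) ℚ_[p])]
    [BorelSpace (Matrix (Fin n) (Fin n) ℚ_[p] × Matrix (Fin n) (Fin n) ℚ_[p])]
    (r : ℝ) (hr : 0 ≤ r) :
    ∀ μ : Measure (Matrix (Fin n) (Fin n) ℚ_[p] × Matrix (Fin n) (Fin n) ℚ_[p]),
      μ.IsAddHaarMeasure →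
      LocallyIntegrable
        (fun X => ‖weylDiscriminantGuoJacquet p n X‖ ^ (-(1 / 4 : ℝ)) *
          (max 1 (-(1 / 2 : ℝ) * Real.log ‖weylDiscriminantGuoJacquet p n X‖)) ^ r) μ := by
  intro μ hμ
  have : NeZero n := ⟨by omega⟩
  obtain ⟨s, hs, hloc⟩ :=
    exists_locallyIntegrable_norm_weylDiscriminantGuoJacquet_rpow_neg (p := p) (n := n)
  have hmeas : Measurable fun X => ‖weylDiscriminantGuoJacquet p n X‖ :=
    continuous_weylDiscriminantGuoJacquet.norm.measurable
  have hbound := ((hloc μ hμ).smul ((1 + (r + 1) / (s - 1 / 4)) ^ (r + 1))).add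
    (locallyIntegrable_const 1)
  refine hbound.mono ((hmeas.pow_const _).mul ((measurable_const.max
    (hmeas.log.const_mul _)).pow_const _)).aestronglyMeasurable (.of_forall fun X => ?_)
  rw [Real.norm_of_nonneg (by positivity)]
  exact (rpow_neg_mul_max_one_neg_half_log_rpow_le (by norm_num) hs hr (norm_nonneg _)).trans
    (le_abs_self _)
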